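/- Let X be a standard Borel space, E a countable Borel equivalence relation on X, ρ : E → (0,∞) a Borel cocycle, f : X → [0,∞) a Borel function, δ > 0, and ε a real number with ε > sup{ f(x) − f(y) : (x,y) ∈ E }. Then there exist an E-invariant Borel set B ⊆ X and a finite Borel subequivalence relation F of E restricted to B such that ρ restricted to E restricted to the complement of B is smooth and δ·ε > sup{ ∫ f dμ^ρ_{[x]_F} − ∫ f dμ^ρ_{[y]_F} : (x,y) ∈ E restricted to B }. -/

import Mathlib

open MeasureTheory Set ENNReal

namespace CocycleNadkarni

variable {X : Type*} {Γ : Type*}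

/-- The `ρ`-size of `Y` relative to the point `z`: `∑_{y ∈ Y} ρ(y, z)`. -/
noncomputable def eSize (ρ : X → X → ℝ) (Y : Set X) (z : X) : ℝ≥0∞ :=
  ∑' y : Y, ENNReal.ofReal (ρ y z)

/-- The `ρ`-size of `Y` relative to the set `Z`, computed at the point `z`. -/
noncomputable def relSize (ρ : X → X → ℝ) (Y Z : Set X) (z : X) : ℝ≥0∞ :=
  eSize ρ Y z / eSize ρ Z z

/-- Real-valued `ρ`-size (used for finite sets). -/
noncomputable def rSize (ρ : X → X → ℝ) (Y : Set X) (z : X) : ℝ :=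
  ∑' y : Y, ρ y z

/-- `∫_C f dμ^ρ_S`, computed at the point `z`. -/
noncomputable def avgOn (ρ : X → X → ℝ) (f : X → ℝ) (S C : Set X) (z : X) : ℝ :=
  (∑' y : ↥(S ∩ C), f y * ρ y z) / rSize ρ S z

/-- countable Borel equivalence relation -/
def IsCBER [MeasurableSpace X] (E : X → X → Prop) : Prop :=
  Equivalence E ∧ MeasurableSet {p : X × X | E p.1 p.2} ∧ ∀ x : X, {y | E x y}.Countable

/-- Borel cocycle `ρ : E → (0, ∞)` (as a total function whose values off `E` are irrelevant). -/
def IsCocycle [MeasurableSpace X] (E : X → X → Prop) (ρ : X → X → ℝ) : Prop :=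
  Measurable (fun p : X × X => ρ p.1 p.2) ∧
    (∀ ⦃x y : X⦄, E x y → 0 < ρ x y) ∧
    ∀ ⦃x y z : X⦄, E x y → E y z → ρ x z = ρ x y * ρ y z

/-- Borel cocycle into a group `Γ`. -/
def IsGrpCocycle [MeasurableSpace X] [Group Γ] [MeasurableSpace Γ]
    (E : X → X → Prop) (ρ : X → X → Γ) : Prop :=
  Measurable (fun p : X × X => ρ p.1 p.2) ∧
    ∀ ⦃x y z : X⦄, E x y → E y z → ρ x z = ρ x y * ρ y z

/-- finite Borel subequivalence relation of `E` -/
def IsFinSubequiv [MeasurableSpace X] (E F : X → X → Prop) : Prop :=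
  Equivalence F ∧ MeasurableSet {p : X × X | F p.1 p.2} ∧
    (∀ ⦃x y : X⦄, F x y → E x y) ∧ ∀ x : X, {y | F x y}.Finite

/-- finite Borel subequivalence relation of `E` restricted to `W` (extended by the diagonal). -/
def IsFinSubequivOn [MeasurableSpace X] (E : X → X → Prop) (W : Set X)
    (F : X → X → Prop) : Prop :=
  Equivalence F ∧ MeasurableSet {p : X × X | F p.1 p.2} ∧
    (∀ ⦃x y : X⦄, F x y → x = y ∨ (E x y ∧ x ∈ W ∧ y ∈ W)) ∧ ∀ x : X, {y | F x y}.Finite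

/-- `ρ`-invariance of a Borel measure. -/
def IsInvariant [MeasurableSpace X] (E : X → X → Prop) (ρ : X → X → ℝ)
    (μ : Measure X) : Prop :=
  ∀ T : X ≃ᵐ X, (∀ x, E (T x) x) → ∀ B : Set X, MeasurableSet B →
    μ (T '' B) = ∫⁻ x in B, ENNReal.ofReal (ρ (T x) x) ∂μ

/-- invariance w.r.t. the restriction of `ρ` to a set `R` of pairs, via Borel injections
whose graphs are contained in `R⁻¹`. -/
def IsInvariantRel [MeasurableSpace X] (R : Set (X × X)) (ρ : X → X → ℝ)
    (μ : Measure X) : Prop :=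
  ∀ (B : Set X) (T : X → X), MeasurableSet B → Measurable T → Set.InjOn T B →
    (∀ x ∈ B, ((T x, x) : X × X) ∈ R) →
    μ (T '' B) = ∫⁻ x in B, ENNReal.ofReal (ρ (T x) x) ∂μ

/-- a Borel ℕ-coloring of the lacunarity digraph `G^ρ_Z`. -/
def HasColoring [MeasurableSpace X] (E : X → X → Prop) (ρ : X → X → Γ)
    (Z : Set Γ) : Prop :=
  ∃ c : X → ℕ, Measurable c ∧
    ∀ ⦃x y : X⦄, x ≠ y → E x y → ρ x y ∈ Z → c x ≠ c y

/-- smoothness of the cocycle `ρ` restricted to `E` restricted to `W`. -/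
def SmoothOn [MeasurableSpace X] (E : X → X → Prop) (ρ : X → X → ℝ)
    (W : Set X) : Prop :=
  ∃ U : Set ℝ, IsOpen U ∧ (1:ℝ) ∈ U ∧ U ⊆ Set.Ioi 0 ∧
    ∃ c : X → ℕ, Measurable c ∧
      ∀ ⦃x y : X⦄, x ∈ W → y ∈ W → x ≠ y → E x y → ρ x y ∈ U → c x ≠ c y

/-- smoothness of the cocycle `ρ` on `E`. -/
def Smooth [MeasurableSpace X] (E : X → X → Prop) (ρ : X → X → ℝ) : Prop :=
  SmoothOn E ρ Set.univ

/-- `E`-invariance of a set. -/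
def EInvariant (E : X → X → Prop) (B : Set X) : Prop :=
  ∀ ⦃x y : X⦄, E x y → x ∈ B → y ∈ B

/-- a compression of `ρ` over the finite subequivalence relation `F` of `E`. -/
def CompressionOver [MeasurableSpace X] (E F : X → X → Prop) (ρ : X → X → ℝ)
    (φ : X → X) : Prop :=
  (∀ x, E x (φ x)) ∧
  (∀ x : X, relSize ρ (φ ⁻¹' {y | F y x}) {y | F y x} x ≤ 1) ∧
  (∀ x : X, ∃ y, E x y ∧ relSize ρ (φ ⁻¹' {z | F z y}) {z | F z y} y < 1)

/-- a compression of the quotient of `ρ | E | W` by the finite subequivalence relation given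
by the setoid `s`, expressed via representatives. -/
def QuotCompressionOn [MeasurableSpace X] (E : X → X → Prop) (ρ : X → X → ℝ)
    (W : Set X) (s : Setoid X) (φ : Quotient s → Quotient s) : Prop :=
  (∀ ⦃x : X⦄, x ∈ W → ∀ y : X, φ (Quotient.mk s x) = Quotient.mk s y → (E x y ∧ y ∈ W)) ∧
  (∀ ⦃x : X⦄, x ∈ W →
    relSize ρ {y | y ∈ W ∧ φ (Quotient.mk s y) = Quotient.mk s x} {y | s.r y x} x ≤ 1) ∧
  (∀ ⦃x : X⦄, x ∈ W → ∃ y, y ∈ W ∧ E x y ∧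
    relSize ρ {z | z ∈ W ∧ φ (Quotient.mk s z) = Quotient.mk s y} {z | s.r z y} y < 1)


/-- `B` has `ρ`-density at least `ε` relative to `W`. -/
def HasDensityAtLeastOn [MeasurableSpace X] (E : X → X → Prop) (ρ : X → X → ℝ)
    (B W : Set X) (ε : ℝ) : Prop :=
  ∃ F : X → X → Prop, IsFinSubequivOn E W F ∧
    ∀ x ∈ W, ENNReal.ofReal ε ≤ relSize ρ (B ∩ {y | F y x}) {y | F y x} x

/-- `B` has positive `ρ`-density relative to `W`. -/
def HasPosDensityOn [MeasurableSpace X] (E : X → X → Prop) (ρ : X → X → ℝ)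
    (B W : Set X) : Prop :=
  ∃ ε : ℝ, 0 < ε ∧ HasDensityAtLeastOn E ρ B W ε

/-- `B` has σ-positive `ρ`-density relative to `W`. -/
def HasSigmaPosDensityOn [MeasurableSpace X] (E : X → X → Prop) (ρ : X → X → ℝ)
    (B W : Set X) : Prop :=
  ∃ A : ℕ → Set X, (∀ n, MeasurableSet (A n)) ∧ (∀ n, A n ⊆ W) ∧
    (∀ n, ∀ x ∈ A n, ∀ y ∈ W, E x y → y ∈ A n) ∧ W = ⋃ n, A n ∧
    ∀ n, HasPosDensityOn E ρ (B ∩ A n) (A n)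

/-- countable unions of Borel sets on which `p` is injective -/
def LNSmall {Z X : Type*} [MeasurableSpace Z] (p : Z → X) (S : Set Z) : Prop :=
  ∃ D : Set (Set Z), D.Countable ∧ (∀ d ∈ D, MeasurableSet d ∧ Set.InjOn p d) ∧ S = ⋃₀ D

/-- a family of sets all meeting a common fibre outside any given small set -/
def LNLarge {Z X : Type*} [MeasurableSpace Z] (p : Z → X) (U : Set (Set Z)) : Prop :=
  ∀ S, LNSmall p S → ∃ x, ∀ V ∈ U, ∃ z ∈ V, z ∉ S ∧ p z = x

theorem LNSmall.measurableSet {Z X : Type*} [MeasurableSpace Z] {p : Z → X} {S : Set Z}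
    (h : LNSmall p S) : MeasurableSet S := by
  obtain ⟨D, hD, hm, rfl⟩ := h
  exact MeasurableSet.sUnion hD fun d hd => (hm d hd).1

theorem LNSmall.empty {Z X : Type*} [MeasurableSpace Z] {p : Z → X} :
    LNSmall p (∅ : Set Z) := ⟨∅, countable_empty, by simp, by simp⟩

theorem LNSmall.iUnion {Z X : Type*} [MeasurableSpace Z] {p : Z → X} {ι : Type*} [Countable ι]
    {S : ι → Set Z} (h : ∀ i, LNSmall p (S i)) : LNSmall p (⋃ i, S i) := by
  choose D hD hm hS using h
  refine ⟨⋃ i, D i, countable_iUnion hD, ?_, ?_⟩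
  · intro d hd
    obtain ⟨i, hi⟩ := mem_iUnion.1 hd
    exact hm i d hi
  · rw [sUnion_iUnion]
    exact iUnion_congr hS

theorem LNSmall.union {Z X : Type*} [MeasurableSpace Z] {p : Z → X} {S A : Set Z}
    (h : LNSmall p S) (hA : MeasurableSet A) (hi : Set.InjOn p A) : LNSmall p (S ∪ A) := by
  obtain ⟨D, hD, hm, rfl⟩ := h
  refine ⟨insert A D, hD.insert _, ?_, ?_⟩
  · rintro d (rfl | hd)
    · exact ⟨hA, hi⟩
    · exact hm d hd
  · rw [sUnion_insert, union_comm]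

theorem LNLarge.split {Z X : Type*} [MetricSpace Z] [CompleteSpace Z] [SecondCountableTopology Z]
    [MeasurableSpace Z] [BorelSpace Z] [TopologicalSpace X] [T2Space X] [SecondCountableTopology X]
    [MeasurableSpace X] [BorelSpace X] {p : Z → X} (hp : Continuous p)
    {U : Set Z} (hU : IsOpen U) {𝒱 : Set (Set Z)} (h𝒱 : 𝒱.Finite) (h𝒱o : ∀ V ∈ 𝒱, IsOpen V)
    (h : LNLarge p (insert U 𝒱)) {ε : ℝ} (hε : 0 < ε) :
    ∃ V W : Set Z, IsOpen V ∧ IsOpen W ∧ closure V ⊆ U ∧ closure W ⊆ U ∧ Disjoint V W ∧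
      (∀ a ∈ V, ∀ b ∈ V, dist a b < ε) ∧ (∀ a ∈ W, ∀ b ∈ W, dist a b < ε) ∧
      LNLarge p (insert V (insert W 𝒱)) := by
  by_contra hcon
  push Not at hcon
  let b := TopologicalSpace.countableBasis Z
  have hb := TopologicalSpace.isBasis_countableBasis Z
  let I := {q : b × b // closure (q.1 : Set Z) ⊆ U ∧ closure (q.2 : Set Z) ⊆ U ∧
    Disjoint (q.1 : Set Z) (q.2 : Set Z) ∧
    (∀ a ∈ (q.1 : Set Z), ∀ b ∈ (q.1 : Set Z), dist a b < ε) ∧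
    (∀ a ∈ (q.2 : Set Z), ∀ b ∈ (q.2 : Set Z), dist a b < ε)}
  have : Countable b := (TopologicalSpace.countable_countableBasis Z).to_subtype
  have key : ∀ q : I, ∃ S, LNSmall p S ∧ ∀ x, ∃ V ∈ insert (q.1.1 : Set Z) (insert (q.1.2 : Set Z) 𝒱),
      ∀ z ∈ V, z ∉ S → p z ≠ x := by
    rintro ⟨⟨⟨V, hV⟩, ⟨W, hW⟩⟩, h1, h2, h3, h4, h5⟩
    have := hcon V W (hb.isOpen hV) (hb.isOpen hW) h1 h2 h3 h4 h5
    unfold LNLarge at this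
    push Not at this
    exact this
  choose S hS hSx using key
  have hT : LNSmall p (⋃ q, S q) := LNSmall.iUnion hS
  set T := ⋃ q, S q with hTdef
  -- the two-point claim
  have two : ∀ z ∈ U, z ∉ T → ∀ z' ∈ U, z' ∉ T → p z = p z' →
      (∀ V ∈ 𝒱, ∃ y ∈ V, y ∉ T ∧ p y = p z) → z = z' := by
    intro z hz hzT z' hz' hzT' hpz hV
    by_contra hne
    have hd : 0 < dist z z' := dist_pos.2 hne
    have ball : ∀ w ∈ U, ∃ r > 0, r ≤ ε / 2 ∧ r ≤ dist z z' / 2 ∧ Metric.closedBall w r ⊆ U := by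
      intro w hw
      obtain ⟨r, hr, hrU⟩ := Metric.nhds_basis_closedBall.mem_iff.1 (hU.mem_nhds hw)
      refine ⟨min r (min (ε/2) (dist z z' / 2)), by positivity, ?_, ?_, ?_⟩
      · exact (min_le_right _ _).trans (min_le_left _ _)
      · exact (min_le_right _ _).trans (min_le_right _ _)
      · exact (Metric.closedBall_subset_closedBall (min_le_left _ _)).trans hrU
    obtain ⟨r, hr, hrε, hrd, hrU⟩ := ball z hz
    obtain ⟨r', hr', hrε', hrd', hrU'⟩ := ball z' hz'
    obtain ⟨V, hVb, hzV, hVs⟩ := hb.exists_subset_of_mem_open (Metric.mem_ball_self hr)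
      (Metric.isOpen_ball (x := z) (ε := r))
    obtain ⟨W, hWb, hzW, hWs⟩ := hb.exists_subset_of_mem_open (Metric.mem_ball_self hr')
      (Metric.isOpen_ball (x := z') (ε := r'))
    have cl : ∀ (w : Z) (r : ℝ) (V : Set Z), V ⊆ Metric.ball w r → closure V ⊆ Metric.closedBall w r :=
      fun w r V h => (closure_mono h).trans Metric.closure_ball_subset_closedBall
    have dm : ∀ (w : Z) (r : ℝ) (V : Set Z), r ≤ ε/2 → V ⊆ Metric.ball w r →
        ∀ a ∈ V, ∀ b ∈ V, dist a b < ε := by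
      intro w r V hr h a ha b hb
      have h1 := Metric.mem_ball.1 (h ha)
      have h2 := Metric.mem_ball'.1 (h hb)
      linarith [dist_triangle a w b]
    have hdisj : Disjoint V W := by
      rw [Set.disjoint_left]
      intro a ha hb
      have h1 := Metric.mem_ball'.1 (hVs ha)
      have h2 := Metric.mem_ball.1 (hWs hb)
      linarith [dist_triangle z a z']
    let q : I := ⟨⟨⟨V, hVb⟩, ⟨W, hWb⟩⟩, (cl _ _ _ hVs).trans hrU, (cl _ _ _ hWs).trans hrU', hdisj,
      dm _ _ _ hrε hVs, dm _ _ _ hrε' hWs⟩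
    have hq : ∀ y, y ∉ T → y ∉ S q := fun y hy hyS => hy (mem_iUnion.2 ⟨q, hyS⟩)
    obtain ⟨A, hA, hAx⟩ := hSx q (p z)
    rcases hA with rfl | rfl | hA
    · exact hAx z hzV (hq _ hzT) rfl
    · exact hAx z' hzW (hq _ hzT') hpz.symm
    · obtain ⟨y, hy, hyT, hyp⟩ := hV A hA
      exact hAx y hy (hq _ hyT) hyp
  -- reflection
  have hPZ : PolishSpace Z := inferInstance
  let N : Set X := ⋂ V : ↥(insert U 𝒱), p '' ((V : Set Z) \ T)
  have : Countable ↥(insert U 𝒱) := (h𝒱.insert U).countable.to_subtype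
  have hop : ∀ V ∈ insert U 𝒱, IsOpen V := by
    rintro V (rfl | hV)
    · exact hU
    · exact h𝒱o V hV
  have hN : AnalyticSet N := by
    have : Nonempty ↥(insert U 𝒱) := ⟨⟨U, mem_insert _ _⟩⟩
    refine AnalyticSet.iInter fun V => ?_
    exact ((hop V V.2).measurableSet.diff hT.measurableSet).analyticSet_image hp.measurable
  have inter : ∀ A B : Set X, AnalyticSet A → AnalyticSet B → AnalyticSet (A ∩ B) := by
    intro A B hA hB
    rw [inter_eq_iInter]
    refine AnalyticSet.iInter fun i => ?_
    cases i <;> assumption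
  have sep : ∀ O : b, ∃ D : Set X, MeasurableSet D ∧ (∀ z ∈ U, z ∉ T → p z ∈ N → (z ∈ (O : Set Z) ↔ p z ∈ D)) := by
    intro O
    have hO : IsOpen (O : Set Z) := hb.isOpen O.2
    have a1 : AnalyticSet (p '' ((U \ T) ∩ O) ∩ N) := inter _ _
      (((hU.measurableSet.diff hT.measurableSet).inter hO.measurableSet).analyticSet_image
        hp.measurable) hN
    have a2 : AnalyticSet (p '' ((U \ T) \ O) ∩ N) := inter _ _
      (((hU.measurableSet.diff hT.measurableSet).diff hO.measurableSet).analyticSet_image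
        hp.measurable) hN
    obtain ⟨D, hD1, hD2, hD⟩ := a1.measurablySeparable a2 (by
      rw [Set.disjoint_left]
      rintro x ⟨⟨z, ⟨⟨hzU, hzT⟩, hzO⟩, rfl⟩, hxN⟩ ⟨⟨z', ⟨⟨hzU', hzT'⟩, hzO'⟩, hpz⟩, -⟩
      have : z = z' := two z hzU hzT z' hzU' hzT' hpz.symm (by
        intro V hV
        obtain ⟨y, ⟨hy, hyT⟩, hyp⟩ := mem_iInter.1 hxN ⟨V, mem_insert_of_mem _ hV⟩
        exact ⟨y, hy, hyT, hyp⟩)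
      exact hzO' (this ▸ hzO))
    refine ⟨D, hD, fun z hz hzT hzN => ⟨fun h => hD1 ⟨⟨z, ⟨⟨hz, hzT⟩, h⟩, rfl⟩, hzN⟩, fun h => ?_⟩⟩
    by_contra hzO
    exact Set.disjoint_left.1 hD2 ⟨⟨z, ⟨⟨hz, hzT⟩, hzO⟩, rfl⟩, hzN⟩ h
  choose D hD hDz using sep
  let A : Set Z := ⋂ O : b, {z | z ∈ (O : Set Z) ↔ p z ∈ D O}
  have hA : MeasurableSet A := by
    refine MeasurableSet.iInter fun O => ?_
    have h1 : MeasurableSet {z : Z | z ∈ (O : Set Z)} := (hb.isOpen O.2).measurableSet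
    have h2 : MeasurableSet {z : Z | p z ∈ D O} := hp.measurable (hD O)
    exact h1.iff h2
  have hAi : Set.InjOn p A := by
    intro z hz z' hz' hpz
    by_contra hne
    obtain ⟨O, hO, hzO, hOs⟩ := hb.exists_subset_of_mem_open (a := z) (u := {z'}ᶜ) hne
      isOpen_compl_singleton
    have h1 := (mem_iInter.1 hz ⟨O, hO⟩).1 hzO
    have h2 := (mem_iInter.1 hz' ⟨O, hO⟩).2 (hpz ▸ h1)
    exact hOs h2 rfl
  obtain ⟨x, hx⟩ := h _ (hT.union hA hAi)
  obtain ⟨z, hzU, hz, rfl⟩ := hx U (mem_insert _ _)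
  apply hz
  right
  refine mem_iInter.2 fun O => hDz O z hzU (fun h => hz (Or.inl h)) ?_
  refine mem_iInter.2 fun V => ?_
  obtain ⟨y, hy, hyT, hyp⟩ := hx V V.2
  exact ⟨y, ⟨hy, fun h => hyT (Or.inl h)⟩, hyp⟩

theorem LNLarge.splitAll {Z X : Type*} [MetricSpace Z] [CompleteSpace Z] [SecondCountableTopology Z]
    [MeasurableSpace Z] [BorelSpace Z] [TopologicalSpace X] [T2Space X] [SecondCountableTopology X]
    [MeasurableSpace X] [BorelSpace X] {p : Z → X} (hp : Continuous p) {ε : ℝ} (hε : 0 < ε)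
    {𝒰 : Set (Set Z)} (h𝒰 : 𝒰.Finite) : (∀ U ∈ 𝒰, IsOpen U) →
    ∀ 𝒱 : Set (Set Z), 𝒱.Finite → (∀ U ∈ 𝒱, IsOpen U) → LNLarge p (𝒰 ∪ 𝒱) →
    ∃ 𝒲 : Set (Set Z), 𝒲.Finite ∧ (∀ U ∈ 𝒲, IsOpen U ∧ ∀ a ∈ U, ∀ b ∈ U, dist a b < ε) ∧
      LNLarge p (𝒲 ∪ 𝒱) ∧ ∀ U ∈ 𝒰, ∃ V ∈ 𝒲, ∃ W ∈ 𝒲, closure V ⊆ U ∧ closure W ⊆ U ∧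
        Disjoint V W := by
  induction 𝒰, h𝒰 using Set.Finite.induction_on with
  | empty =>
    intro _ 𝒱 _ _ h
    exact ⟨∅, finite_empty, by simp, h, by simp⟩
  | @insert U 𝒰 hU hfin ih =>
    intro ho 𝒱 h𝒱 h𝒱o h
    rw [insert_union] at h
    have ho' : ∀ U ∈ 𝒰, IsOpen U := fun V hV => ho V (mem_insert_of_mem _ hV)
    obtain ⟨V, W, hV, hW, hVU, hWU, hd, dV, dW, hL⟩ := LNLarge.split hp (ho U (mem_insert _ _))
      (hfin.union h𝒱) (by rintro A (hA | hA); exacts [ho' A hA, h𝒱o A hA]) h hε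
    obtain ⟨𝒲, h1, h2, h3, h4⟩ := ih ho' (insert V (insert W 𝒱)) ((h𝒱.insert W).insert V)
      (by rintro A (rfl | rfl | hA); exacts [hV, hW, h𝒱o A hA])
      (by
        convert hL using 1
        ext A; simp only [mem_union, mem_insert_iff]; tauto)
    refine ⟨insert V (insert W 𝒲), (h1.insert W).insert V, ?_, ?_, ?_⟩
    · rintro A (rfl | rfl | hA)
      exacts [⟨hV, dV⟩, ⟨hW, dW⟩, h2 A hA]
    · convert h3 using 1
      ext A; simp only [mem_union, mem_insert_iff]; tauto
    · rintro A (rfl | hA)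
      · exact ⟨V, by simp, W, by simp, hVU, hWU, hd⟩
      · obtain ⟨V', hV', W', hW', h5⟩ := h4 A hA
        exact ⟨V', by simp [hV'], W', by simp [hW'], h5⟩

theorem LN_metric {Z X : Type*} [MetricSpace Z] [CompleteSpace Z] [SecondCountableTopology Z]
    [MeasurableSpace Z] [BorelSpace Z] [TopologicalSpace X] [T2Space X] [SecondCountableTopology X]
    [MeasurableSpace X] [BorelSpace X] {p : Z → X} (hp : Continuous p)
    (hc : ∀ x, (p ⁻¹' {x}).Countable) : LNSmall p (univ : Set Z) := by
  by_contra hns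
  have hL : LNLarge p {(univ : Set Z)} := by
    intro S hS
    by_contra hcon
    push Not at hcon
    apply hns
    convert hS
    symm
    rw [eq_univ_iff_forall]
    intro z
    obtain ⟨V, hV, hVz⟩ := hcon (p z)
    by_contra hz
    exact hVz z (by rw [mem_singleton_iff.1 hV]; trivial) hz rfl
  let St := {𝒰 : Set (Set Z) // 𝒰.Finite ∧ (∀ U ∈ 𝒰, IsOpen U) ∧ LNLarge p 𝒰}
  have step : ∀ (n : ℕ) (s : St), ∃ t : St, (∀ U ∈ t.1, ∀ a ∈ U, ∀ b ∈ U, dist a b < (1/2:ℝ)^n) ∧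
      ∀ U ∈ s.1, ∃ V ∈ t.1, ∃ W ∈ t.1, closure V ⊆ U ∧ closure W ⊆ U ∧ Disjoint V W := by
    rintro n ⟨𝒰, h1, h2, h3⟩
    obtain ⟨𝒲, w1, w2, w3, w4⟩ := LNLarge.splitAll hp (ε := (1/2:ℝ)^n) (by positivity) h1 h2 ∅
      finite_empty (by simp) (by simpa using h3)
    exact ⟨⟨𝒲, w1, fun U hU => (w2 U hU).1, by simpa using w3⟩, fun U hU => (w2 U hU).2, w4⟩
  choose nxt hdiam hch using step
  let s0 : St := ⟨{univ}, finite_singleton _, by simp, hL⟩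
  let sq : ℕ → St := fun n => Nat.rec s0 (fun n s => nxt n s) n
  have hsq : ∀ n, sq (n+1) = nxt n (sq n) := fun n => rfl
  have hch' : ∀ n (U : (sq n).1), ∃ V W : (sq (n+1)).1, closure (V : Set Z) ⊆ U ∧
      closure (W : Set Z) ⊆ U ∧ Disjoint (V : Set Z) W := by
    intro n U
    obtain ⟨V, hV, W, hW, h⟩ := hch n (sq n) U U.2
    exact ⟨⟨V, hV⟩, ⟨W, hW⟩, h⟩
  choose L R hLU hRU hLR using hch'
  let path : (ℕ → Bool) → ∀ n, (sq n).1 := fun α n =>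
    Nat.rec (motive := fun n => (sq n).1) ⟨univ, mem_singleton _⟩
      (fun n U => if α n then L n U else R n U) n
  have hpath : ∀ α n, path α (n+1) = if α n then L n (path α n) else R n (path α n) :=
    fun α n => rfl
  have hcl : ∀ α n, closure (path α (n+1) : Set Z) ⊆ path α n := by
    intro α n
    rw [hpath]
    split_ifs
    · exact hLU n _
    · exact hRU n _
  have hanti : ∀ α, Antitone fun n => (path α n : Set Z) := fun α =>
    antitone_nat_of_succ_le fun n => subset_closure.trans (hcl α n)
  have hx : ∀ n, ∃ x, ∀ V ∈ (sq n).1, ∃ z ∈ V, p z = x := by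
    intro n
    obtain ⟨x, hx⟩ := (sq n).2.2.2 ∅ LNSmall.empty
    exact ⟨x, fun V hV => by obtain ⟨z, h1, _, h2⟩ := hx V hV; exact ⟨z, h1, h2⟩⟩
  choose x hx using hx
  have hpt : ∀ α, ∃ z, (∀ n, z ∈ (path α n : Set Z)) ∧ Filter.Tendsto x Filter.atTop (nhds (p z)) := by
    intro α
    have := fun n => hx n (path α n) (path α n).2
    choose w hw hwx using this
    have hcau : CauchySeq w := by
      rw [Metric.cauchySeq_iff']
      intro ε hε
      obtain ⟨N, hN⟩ := exists_pow_lt_of_lt_one hε (by norm_num : (1/2:ℝ) < 1)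
      refine ⟨N+1, fun n hn => ?_⟩
      exact (hdiam N (sq N) (path α (N+1)) (path α (N+1)).2 _ (hanti α hn (hw n)) _ (hw (N+1))).trans hN
    obtain ⟨z, hz⟩ := cauchySeq_tendsto_of_complete hcau
    refine ⟨z, fun n => hcl α n ?_, ?_⟩
    · refine mem_closure_of_tendsto hz ?_
      filter_upwards [Filter.eventually_ge_atTop (n+1)] with m hm
      exact hanti α hm (hw m)
    · have := (hp.tendsto z).comp hz
      refine this.congr fun n => hwx n
  choose z hz hzx using hpt
  have hinj : Function.Injective z := by
    intro α β hαβ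
    have key : ∀ n, path α n = path β n → α n = β n := by
      intro n hn
      by_contra hne
      have h1 := hz α (n+1)
      have h2 := hz β (n+1)
      rw [hpath] at h1 h2
      rw [← hαβ, ← hn] at h2
      cases ha : α n <;> cases hb : β n <;> simp [ha, hb] at h1 h2 hne
      · exact Set.disjoint_left.1 (hLR n _) h2 h1
      · exact Set.disjoint_left.1 (hLR n _) h1 h2
    have all : ∀ n, path α n = path β n := by
      intro n
      induction n with
      | zero => rfl
      | succ n ih => rw [hpath, hpath, ih, key n ih]
    funext n
    exact key n (all n)
  have hfib : ∀ α, z α ∈ p ⁻¹' {p (z fun _ => false)} := fun α =>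
    tendsto_nhds_unique (hzx α) (hzx _)
  have hcount : (range z).Countable := (hc _).mono (by rintro _ ⟨α, rfl⟩; exact hfib α)
  have : Countable (ℕ → Bool) := by
    have := hcount.to_subtype
    exact (Set.rangeFactorization_injective.2 hinj).countable
  obtain ⟨e, he⟩ := exists_surjective_nat (ℕ → Bool)
  obtain ⟨n, hn⟩ := he fun n => !(e n n)
  have := congrFun hn n
  simp at this

theorem LN_standard {Z X : Type*} [MeasurableSpace Z] [StandardBorelSpace Z] [MeasurableSpace X]
    [StandardBorelSpace X] {p : Z → X} (hp : Measurable p) (hc : ∀ x, (p ⁻¹' {x}).Countable) :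
    LNSmall p (univ : Set Z) := by
  let := upgradeStandardBorel X
  let i1 := upgradeStandardBorel Z
  let tZ : TopologicalSpace Z := i1.toTopologicalSpace
  obtain ⟨t', ht', hcont, hpol⟩ := hp.exists_continuous
  have hb : @BorelSpace Z t' _ := by
    refine @BorelSpace.mk Z t' _ ?_
    rw [eq_borel_upgradeStandardBorel Z]
    exact (borel_eq_borel_of_le hpol i1.toPolishSpace ht').symm
  clear_value i1
  let := t'
  let := TopologicalSpace.upgradeIsCompletelyMetrizable Z
  exact LN_metric hcont hc

theorem exists_gens {X : Type*} [MeasurableSpace X] [StandardBorelSpace X]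
    {E : X → X → Prop} (hE : IsCBER E) :
    ∃ g : ℕ → X → X, (∀ n, Measurable (g n)) ∧ ∀ x y, E x y ↔ ∃ n, g n x = y := by
  classical
  obtain ⟨heq, hm, hc⟩ := hE
  let Z := {p : X × X // E p.1 p.2}
  have : StandardBorelSpace Z := hm.standardBorel
  let p : Z → X := fun z => z.1.1
  let q : Z → X := fun z => z.1.2
  have hp : Measurable p := measurable_fst.comp measurable_subtype_coe
  have hq : Measurable q := measurable_snd.comp measurable_subtype_coe
  have hcf : ∀ x, (p ⁻¹' {x}).Countable := by
    intro x
    refine Set.MapsTo.countable_of_injOn (f := q) (t := {y | E x y}) ?_ ?_ (hc x)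
    · rintro ⟨⟨a, b⟩, h⟩ (rfl : a = x)
      exact h
    · rintro ⟨⟨a, b⟩, h⟩ (rfl : a = x) ⟨⟨a', b'⟩, h'⟩ (rfl : a' = _) (hbb : b = b')
      subst hbb
      rfl
  obtain ⟨D, hD, hDm, hDu⟩ := LN_standard hp hcf
  obtain ⟨d, hd⟩ := (hD.insert ∅).exists_eq_range (insert_nonempty _ _)
  have hdm : ∀ n, MeasurableSet (d n) ∧ InjOn p (d n) := by
    intro n
    have : d n ∈ insert ∅ D := hd ▸ mem_range_self n
    rcases this with h | h
    · rw [h]; exact ⟨MeasurableSet.empty, injOn_empty _⟩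
    · exact hDm _ h
  let g : ℕ → X → X := fun n x => if h : ∃ z ∈ d n, p z = x then q h.choose else x
  have hg1 : ∀ n, ∀ z ∈ d n, g n (p z) = q z := by
    intro n z hz
    have h : ∃ z' ∈ d n, p z' = p z := ⟨z, hz, rfl⟩
    have : g n (p z) = q h.choose := dif_pos h
    rw [this, (hdm n).2 h.choose_spec.1 hz h.choose_spec.2]
  have hg2 : ∀ n x, (¬ ∃ z ∈ d n, p z = x) → g n x = x := fun n x h => dif_neg h
  refine ⟨g, fun n => ?_, fun x y => ⟨fun h => ?_, ?_⟩⟩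
  · intro C hC
    have : g n ⁻¹' C = p '' (d n ∩ q ⁻¹' C) ∪ ((p '' d n)ᶜ ∩ C) := by
      ext x
      by_cases hx : ∃ z ∈ d n, p z = x
      · obtain ⟨z, hz, rfl⟩ := hx
        simp only [mem_preimage, hg1 n z hz, mem_union, mem_inter_iff, mem_compl_iff]
        constructor
        · intro h; left; exact ⟨z, ⟨hz, h⟩, rfl⟩
        · rintro (⟨z', ⟨hz', h'⟩, h''⟩ | ⟨h, -⟩)
          · rwa [(hdm n).2 hz' hz h''] at h'
          · exact absurd ⟨z, hz, rfl⟩ h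
      · simp only [mem_preimage, hg2 n x hx, mem_union, mem_inter_iff, mem_compl_iff]
        constructor
        · intro h; right; exact ⟨hx, h⟩
        · rintro (⟨z', ⟨hz', h'⟩, h''⟩ | ⟨-, h⟩)
          · exact absurd ⟨z', hz', h''⟩ hx
          · exact h
    rw [this]
    refine MeasurableSet.union ?_ (MeasurableSet.inter (MeasurableSet.compl ?_) hC)
    · exact ((hdm n).1.inter (hq hC)).image_of_measurable_injOn hp ((hdm n).2.mono inter_subset_left)
    · exact (hdm n).1.image_of_measurable_injOn hp (hdm n).2
  · have hz : (⟨(x, y), h⟩ : Z) ∈ ⋃₀ D := hDu ▸ mem_univ _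
    obtain ⟨S, hS, hzS⟩ := hz
    have : S ∈ range d := hd ▸ mem_insert_of_mem _ hS
    obtain ⟨n, rfl⟩ := this
    exact ⟨n, hg1 n _ hzS⟩
  · rintro ⟨n, rfl⟩
    by_cases hx : ∃ z ∈ d n, p z = x
    · obtain ⟨z, hz, rfl⟩ := hx
      rw [hg1 n z hz]
      exact z.2
    · rw [hg2 n x hx]
      exact heq.refl x

/-- a countable family of Borel functions generating `E`. -/
structure Gens {X : Type*} [MeasurableSpace X] (E : X → X → Prop) (g : ℕ → X → X) : Prop where
  meas : ∀ n, Measurable (g n)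
  iff : ∀ x y, E x y ↔ ∃ n, g n x = y

theorem Gens.exists {X β : Type*} [MeasurableSpace X] [MeasurableSpace β]
    {E : X → X → Prop} {g : ℕ → X → X} (hg : Gens E g) {φ : β → X} (hφ : Measurable φ)
    {Q : β → X → Prop} (hQ : MeasurableSet {q : β × X | Q q.1 q.2}) :
    MeasurableSet {b | ∃ x, E (φ b) x ∧ Q b x} := by
  have : {b | ∃ x, E (φ b) x ∧ Q b x} = ⋃ n, {b | Q b (g n (φ b))} := by
    ext b
    simp only [mem_ofPred_eq, mem_iUnion, hg.iff]
    constructor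
    · rintro ⟨x, ⟨n, rfl⟩, h⟩; exact ⟨n, h⟩
    · rintro ⟨n, h⟩; exact ⟨_, ⟨n, rfl⟩, h⟩
  rw [this]
  refine MeasurableSet.iUnion fun n => ?_
  exact (measurable_id.prodMk ((hg.meas n).comp hφ)) hQ

theorem Gens.forall {X β : Type*} [MeasurableSpace X] [MeasurableSpace β]
    {E : X → X → Prop} {g : ℕ → X → X} (hg : Gens E g) {φ : β → X} (hφ : Measurable φ)
    {Q : β → X → Prop} (hQ : MeasurableSet {q : β × X | Q q.1 q.2}) :
    MeasurableSet {b | ∀ x, E (φ b) x → Q b x} := by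
  have := (hg.exists hφ (Q := fun b x => ¬ Q b x) hQ.compl).compl
  convert this using 1
  ext b
  simp

theorem Gens.tsum {X : Type*} [MeasurableSpace X] [StandardBorelSpace X]
    {E : X → X → Prop} {g : ℕ → X → X} (hg : Gens E g)
    {R : X → X → Prop} (hR : MeasurableSet {q : X × X | R q.1 q.2}) (hRE : ∀ y x, R y x → E x y)
    {h : X → X → ℝ≥0∞} (hh : Measurable fun q : X × X => h q.1 q.2) :
    Measurable fun x => ∑' y : {y | R y x}, h y x := by
  classical
  have key : ∀ x, ∑' y : {y | R y x}, h y x =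
      ∑' n : ℕ, if (R (g n x) x ∧ ∀ j < n, g j x ≠ g n x) then h (g n x) x else 0 := by
    intro x
    let T : Set ℕ := {n | R (g n x) x ∧ ∀ j < n, g j x ≠ g n x}
    have e1 : (∑' n : ℕ, if (R (g n x) x ∧ ∀ j < n, g j x ≠ g n x) then h (g n x) x else 0)
        = ∑' n : T, h (g n x) x := by
      rw [tsum_subtype T (fun n => h (g n x) x)]
      refine tsum_congr fun n => ?_
      by_cases hn : R (g n x) x ∧ ∀ j < n, g j x ≠ g n x
      · rw [if_pos hn, Set.indicator_of_mem (show n ∈ T from hn)]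
      · rw [if_neg hn, Set.indicator_of_notMem (show n ∉ T from hn)]
    rw [e1]
    let φ : T → {y | R y x} := fun n => ⟨g n x, n.2.1⟩
    have hφ : Function.Bijective φ := by
      constructor
      · rintro ⟨a, ha⟩ ⟨b, hb⟩ hab
        have hab' : g a x = g b x := congrArg Subtype.val hab
        rcases lt_trichotomy a b with h | h | h
        · exact absurd hab' (hb.2 a h)
        · exact Subtype.ext h
        · exact absurd hab'.symm (ha.2 b h)
      · rintro ⟨y, hy⟩
        have hex : ∃ n, g n x = y := (hg.iff x y).1 (hRE y x hy)
        refine ⟨⟨Nat.find hex, ?_, ?_⟩, ?_⟩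
        · rw [Nat.find_spec hex]; exact hy
        · intro j hj
          rw [Nat.find_spec hex]
          exact Nat.find_min hex hj
        · exact Subtype.ext (Nat.find_spec hex)
    exact ((Equiv.ofBijective φ hφ).tsum_eq (fun y : {y | R y x} => h y x)).symm
  simp_rw [key]
  refine Measurable.tsum fun n => Measurable.ite ?_ ?_ measurable_const
  · have h1 : MeasurableSet {x | R (g n x) x} := ((hg.meas n).prodMk measurable_id) hR
    have h2 : MeasurableSet {x | ∀ j < n, g j x ≠ g n x} := by
      simp only [ofPred_forall]
      refine MeasurableSet.iInter fun j => MeasurableSet.iInter fun _ => ?_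
      exact (measurableSet_eq_fun (hg.meas j) (hg.meas n)).compl
    exact h1.inter h2
  · exact hh.comp ((hg.meas n).prodMk measurable_id)

theorem Gens.finite {X : Type*} [MeasurableSpace X] [StandardBorelSpace X]
    {E : X → X → Prop} {g : ℕ → X → X} (hg : Gens E g)
    {R : X → X → Prop} (hR : MeasurableSet {q : X × X | R q.1 q.2}) (hRE : ∀ y x, R y x → E x y) :
    MeasurableSet {x | {y | R y x}.Finite} := by
  have h1 := hg.tsum hR hRE (h := fun _ _ => 1) measurable_const
  have : {x | {y | R y x}.Finite} = {x | ∑' y : {y | R y x}, (1 : ℝ≥0∞) = ⊤}ᶜ := by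
    ext x
    simp only [mem_ofPred_eq, mem_compl_iff]
    constructor
    · intro h
      have := h.fintype
      rw [tsum_fintype]
      simp
    · intro h
      by_contra hinf
      have : Infinite {y | R y x} := Set.infinite_coe_iff.2 hinf
      exact h (ENNReal.tsum_const_eq_top_of_ne_zero one_ne_zero)
  rw [this]
  exact (h1 (measurableSet_singleton ⊤)).compl

/-- Borel ℕ-colorings of locally finite Borel digraphs. -/
theorem Gens.color {X : Type*} [MeasurableSpace X] [StandardBorelSpace X]
    {E : X → X → Prop} {g : ℕ → X → X} (hg : Gens E g)
    {R : X → X → Prop} (hR : MeasurableSet {q : X × X | R q.1 q.2}) (hRE : ∀ y x, R y x → E x y)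
    {A : Set X} (hA : MeasurableSet A) (hfin : ∀ x ∈ A, {y | y ∈ A ∧ R y x}.Finite) :
    ∃ c : X → ℕ, Measurable c ∧ ∀ x ∈ A, ∀ y ∈ A, x ≠ y → R y x → c x ≠ c y := by
  classical
  let := upgradeStandardBorel X
  obtain ⟨b, hbc, hb0, hb⟩ := TopologicalSpace.exists_countable_basis X
  obtain ⟨u, hu⟩ := (hbc.insert ∅).exists_eq_range (insert_nonempty _ _)
  have hum : ∀ n, MeasurableSet (u n) := by
    intro n
    have : u n ∈ insert ∅ b := hu ▸ mem_range_self n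
    rcases this with h | h
    · rw [h]; exact MeasurableSet.empty
    · exact (hb.isOpen h).measurableSet
  have hub : ∀ B ∈ b, ∃ n, u n = B := by
    intro B hB
    have : B ∈ range u := hu ▸ mem_insert_of_mem _ hB
    exact this
  let P : ℕ → X → Prop := fun n x => x ∉ A ∨ (x ∈ u n ∧ ∀ y, E x y → (y ∈ A ∧ y ≠ x ∧ R y x → y ∉ u n))
  have hP : ∀ n, MeasurableSet {x | P n x} := by
    intro n
    refine MeasurableSet.union hA.compl (MeasurableSet.inter (hum n) ?_)
    refine hg.forall (φ := fun x => x) measurable_id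
      (Q := fun x y => (y ∈ A ∧ y ≠ x ∧ R y x → y ∉ u n)) ?_
    have m1 : MeasurableSet {q : X × X | q.2 ∈ A} := measurable_snd hA
    have m2 : MeasurableSet {q : X × X | q.2 ≠ q.1} :=
      (measurableSet_eq_fun measurable_snd measurable_fst).compl
    have m3 : MeasurableSet {q : X × X | R q.2 q.1} := measurable_swap hR
    have m4 : MeasurableSet {q : X × X | q.2 ∉ u n} := measurable_snd (hum n).compl
    exact (m1.inter (m2.inter m3)).imp m4
  have hex : ∀ x, ∃ n, P n x := by
    intro x
    by_cases hx : x ∈ A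
    · have hf : ({y | y ∈ A ∧ R y x} \ {x}).Finite := (hfin x hx).subset sdiff_subset
      obtain ⟨B, hB, hxB, hBs⟩ := hb.exists_subset_of_mem_open (a := x)
        (u := ({y | y ∈ A ∧ R y x} \ {x})ᶜ) (by simp) hf.isClosed.isOpen_compl
      obtain ⟨n, rfl⟩ := hub B hB
      refine ⟨n, Or.inr ⟨hxB, fun y _ hy hyu => ?_⟩⟩
      exact hBs hyu ⟨⟨hy.1, hy.2.2⟩, hy.2.1⟩
    · exact ⟨0, Or.inl hx⟩
  refine ⟨fun x => Nat.find (hex x), measurable_find hex hP, ?_⟩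
  intro x hx y hy hxy hRyx hc
  have h1 := Nat.find_spec (hex x)
  have h2 := Nat.find_spec (hex y)
  simp only at hc
  rw [← hc] at h2
  rcases h1 with h1 | h1
  · exact h1 hx
  rcases h2 with h2 | h2
  · exact h2 hy
  exact h1.2 y (hRE y x hRyx) ⟨hy, hxy.symm, hRyx⟩ h2.1

/-- the sets covered before stage `n` of the greedy construction -/
def greedy {X : Type*} (A : ℕ → Set X) (S : ℕ → X → X → Prop) : ℕ → Set X
  | 0 => ∅
  | n + 1 => greedy A S n ∪ {z | ∃ x, x ∈ A n ∧ (∀ y, S n y x → y ∉ greedy A S n) ∧ S n z x}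

theorem Gens.greedy {X : Type*} [MeasurableSpace X] [StandardBorelSpace X]
    {E : X → X → Prop} (hE : Equivalence E) {g : ℕ → X → X} (hg : Gens E g)
    {A : ℕ → Set X} (hA : ∀ n, MeasurableSet (A n)) {S : ℕ → X → X → Prop}
    (hS : ∀ n, MeasurableSet {q : X × X | S n q.1 q.2}) (hSE : ∀ n y x, S n y x → E x y)
    (hSf : ∀ n x, {y | S n y x}.Finite)
    (hdis : ∀ n, ∀ x ∈ A n, ∀ y ∈ A n, ∀ z, S n z x → S n z y → x = y) :
    ∃ (C : Set X) (F : X → X → Prop), MeasurableSet C ∧ Equivalence F ∧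
      MeasurableSet {q : X × X | F q.1 q.2} ∧ (∀ x y, F x y → E x y) ∧ (∀ x, {y | F x y}.Finite) ∧
      (∀ x ∈ C, ∃ n r, r ∈ A n ∧ E r x ∧ {z | F z x} = {z | S n z r}) ∧
      (∀ x, x ∉ C → ∀ z, F z x → z = x) ∧
      (∀ n, ∀ r ∈ A n, (∃ z, S n z r) → ∃ z, S n z r ∧ z ∈ C) := by
  classical
  let G := CocycleNadkarni.greedy A S
  let D : ℕ → Set X := fun n => {x | x ∈ A n ∧ ∀ y, S n y x → y ∉ G n}
  have hGs : ∀ n, G (n+1) = G n ∪ {z | ∃ x, x ∈ A n ∧ (∀ y, S n y x → y ∉ G n) ∧ S n z x} :=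
    fun n => rfl
  have hDm' : ∀ n, MeasurableSet (G n) → MeasurableSet (D n) := by
    intro n hGn
    refine (hA n).inter ?_
    show MeasurableSet {x | ∀ y, S n y x → y ∉ G n}
    have := hg.forall (φ := fun x => x) measurable_id (Q := fun x y => S n y x → y ∉ G n)
      (MeasurableSet.imp (measurable_swap (hS n)) (measurable_snd hGn.compl))
    convert this using 1
    ext x
    exact ⟨fun h y _ => h y, fun h y hy => h y (hSE n y x hy) hy⟩
  have hGm : ∀ n, MeasurableSet (G n) := by
    intro n
    induction n with
    | zero => exact MeasurableSet.empty
    | succ n ih =>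
      rw [hGs]
      refine ih.union ?_
      have := hg.exists (φ := fun x => x) measurable_id (Q := fun z x => x ∈ D n ∧ S n z x)
        ((measurable_snd (hDm' n ih)).inter (hS n))
      convert this using 1
      ext z
      constructor
      · rintro ⟨x, h1, h2, h3⟩
        exact ⟨x, hE.symm (hSE n z x h3), ⟨h1, h2⟩, h3⟩
      · rintro ⟨x, -, ⟨h1, h2⟩, h3⟩
        exact ⟨x, h1, h2, h3⟩
  have hDm : ∀ n, MeasurableSet (D n) := fun n => hDm' n (hGm n)
  have hmono : Monotone G := monotone_nat_of_le_succ fun n => by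
    rw [hGs]; exact subset_union_left
  have hDS : ∀ n, ∀ r ∈ D n, ∀ z, S n z r → z ∈ G (n+1) := by
    intro n r hr z hz
    rw [hGs]
    exact Or.inr ⟨r, hr.1, hr.2, hz⟩
  have hlt : ∀ n m, n < m → ∀ r ∈ D n, ∀ r' ∈ D m, ∀ z, S n z r → S m z r' → False := by
    intro n m hnm r hr r' hr' z hz hz'
    exact hr'.2 z hz' (hmono hnm (hDS n r hr z hz))
  have huniq : ∀ n m, ∀ r ∈ D n, ∀ r' ∈ D m, ∀ z, S n z r → S m z r' → n = m ∧ r = r' := by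
    intro n m r hr r' hr' z hz hz'
    rcases lt_trichotomy n m with h | h | h
    · exact (hlt n m h r hr r' hr' z hz hz').elim
    · subst h
      exact ⟨rfl, hdis n r hr.1 r' hr'.1 z hz hz'⟩
    · exact (hlt m n h r' hr' r hr z hz' hz).elim
  let C := ⋃ n, G n
  let F : X → X → Prop := fun x y => x = y ∨ ∃ n r, r ∈ D n ∧ S n x r ∧ S n y r
  have hC : ∀ x ∈ C, ∃ n r, r ∈ D n ∧ S n x r := by
    intro x hx
    obtain ⟨n, hn⟩ := mem_iUnion.1 hx
    induction n with
    | zero => exact hn.elim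
    | succ n ih =>
      rw [hGs] at hn
      rcases hn with hn | ⟨r, h1, h2, h3⟩
      · exact ih hn
      · exact ⟨n, r, ⟨h1, h2⟩, h3⟩
  have hC' : ∀ n r x, r ∈ D n → S n x r → x ∈ C := fun n r x hr hx =>
    mem_iUnion.2 ⟨n+1, hDS n r hr x hx⟩
  have hclass : ∀ n r x, r ∈ D n → S n x r → {z | F z x} = {z | S n z r} := by
    intro n r x hr hx
    ext z
    constructor
    · rintro (rfl | ⟨m, r', hr', hz, hx'⟩)
      · exact hx
      · obtain ⟨rfl, rfl⟩ := huniq n m r hr r' hr' x hx hx'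
        exact hz
    · intro hz
      exact Or.inr ⟨n, r, hr, hz, hx⟩
  have hFsymm : ∀ x y, F x y → F y x := by
    rintro x y (rfl | ⟨n, r, hr, h1, h2⟩)
    · exact Or.inl rfl
    · exact Or.inr ⟨n, r, hr, h2, h1⟩
  refine ⟨C, F, MeasurableSet.iUnion hGm, ⟨fun x => Or.inl rfl, fun {x y} h => hFsymm x y h, ?_⟩, ?_, ?_, ?_,
    ?_, ?_, ?_⟩
  · rintro x y z (rfl | ⟨n, r, hr, h1, h2⟩) hyz
    · exact hyz
    · have : z ∈ {z | F z y} := hFsymm _ _ hyz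
      rw [hclass n r y hr h2] at this
      exact Or.inr ⟨n, r, hr, h1, this⟩
  · refine MeasurableSet.union (measurableSet_eq_fun measurable_fst measurable_snd) ?_
    have : ∀ n, MeasurableSet {q : X × X | ∃ r, E q.1 r ∧ (r ∈ D n ∧ S n q.1 r ∧ S n q.2 r)} := by
      intro n
      refine hg.exists (φ := fun q : X × X => q.1) measurable_fst
        (Q := fun q r => r ∈ D n ∧ S n q.1 r ∧ S n q.2 r) ?_
      refine (measurable_snd (hDm n)).inter (MeasurableSet.inter ?_ ?_)
      · exact ((measurable_fst.comp measurable_fst).prodMk measurable_snd) (hS n)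
      · exact ((measurable_snd.comp measurable_fst).prodMk measurable_snd) (hS n)
    show MeasurableSet {q : X × X | ∃ n r, r ∈ D n ∧ S n q.1 r ∧ S n q.2 r}
    convert MeasurableSet.iUnion this using 1
    ext ⟨x, y⟩
    simp only [mem_ofPred_eq, mem_iUnion]
    constructor
    · rintro ⟨n, r, hr, h1, h2⟩
      exact ⟨n, r, hE.symm (hSE n x r h1), hr, h1, h2⟩
    · rintro ⟨n, r, -, hr, h1, h2⟩
      exact ⟨n, r, hr, h1, h2⟩
  · rintro x y (rfl | ⟨n, r, hr, h1, h2⟩)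
    · exact hE.refl x
    · exact hE.trans (hE.symm (hSE n x r h1)) (hSE n y r h2)
  · intro x
    by_cases hx : x ∈ C
    · obtain ⟨n, r, hr, h⟩ := hC x hx
      have : {y | F x y} = {y | F y x} := by ext y; exact ⟨hFsymm _ _, hFsymm _ _⟩
      rw [this, hclass n r x hr h]
      exact hSf n r
    · refine (finite_singleton x).subset ?_
      rintro y (rfl | ⟨n, r, hr, h1, h2⟩)
      · rfl
      · exact absurd (hC' n r x hr h1) hx
  · intro x hx
    obtain ⟨n, r, hr, h⟩ := hC x hx
    exact ⟨n, r, hr.1, hSE n x r h, hclass n r x hr h⟩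
  · rintro x hx z (rfl | ⟨n, r, hr, h1, h2⟩)
    · rfl
    · exact absurd (hC' n r x hr h2) hx
  · rintro n r hr ⟨z, hz⟩
    by_cases h : r ∈ D n
    · exact ⟨z, hz, hC' n r z h hz⟩
    · have : ¬ ∀ y, S n y r → y ∉ G n := fun h' => h ⟨hr, h'⟩
      push Not at this
      obtain ⟨y, hy, hyG⟩ := this
      exact ⟨y, hy, mem_iUnion.2 ⟨n, hyG⟩⟩

theorem Gens.maximal {X : Type*} [MeasurableSpace X] [StandardBorelSpace X]
    {E : X → X → Prop} (hE : Equivalence E) {g : ℕ → X → X} (hg : Gens E g)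
    {Good : X → Set X → Prop}
    (hGood : ∀ R : X → X → Prop, MeasurableSet {q : X × X | R q.1 q.2} → (∀ y x, R y x → E x y) →
      MeasurableSet {x | Good x {y | R y x}}) :
    ∃ (C : Set X) (F : X → X → Prop), MeasurableSet C ∧ Equivalence F ∧
      MeasurableSet {q : X × X | F q.1 q.2} ∧ (∀ x y, F x y → E x y) ∧ (∀ x, {y | F x y}.Finite) ∧
      (∀ x ∈ C, ∃ r, E r x ∧ Good r {z | F z x}) ∧
      (∀ x, x ∉ C → ∀ z, F z x → z = x) ∧
      (∀ x (S : Set X), S.Finite → x ∈ S → (∀ y ∈ S, E x y) → Disjoint S C → ¬ Good x S) := by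
  classical
  -- candidate sets
  let R : List (ℕ × ℕ) → X → X → Prop := fun m y x => ∃ p ∈ m, g p.1 x = y
  have hR : ∀ m, MeasurableSet {q : X × X | R m q.1 q.2} := by
    intro m
    have : {q : X × X | R m q.1 q.2} = ⋃ p ∈ {p | p ∈ m}, {q : X × X | g p.1 q.2 = q.1} := by
      ext q; simp [R]
    rw [this]
    refine MeasurableSet.biUnion (Set.to_countable _) fun p _ => ?_
    exact measurableSet_eq_fun ((hg.meas _).comp measurable_snd) measurable_fst
  have hRE : ∀ m y x, R m y x → E x y := by
    rintro m y x ⟨p, -, h⟩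
    exact (hg.iff x y).2 ⟨_, h⟩
  have hRf : ∀ m x, {y | R m y x}.Finite := by
    intro m x
    refine (m.map fun p => g p.1 x).toFinset.finite_toSet.subset ?_
    rintro y ⟨p, hp, rfl⟩
    simp only [List.coe_toFinset, List.mem_map, mem_ofPred_eq]
    exact ⟨p, hp, rfl⟩
  let V : List (ℕ × ℕ) → Set X := fun m => {x | (∀ p ∈ m, g p.2 (g p.1 x) = x) ∧ Good x {y | R m y x}}
  have hV : ∀ m, MeasurableSet (V m) := by
    intro m
    refine MeasurableSet.inter ?_ (hGood _ (hR m) (hRE m))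
    have : {x | ∀ p ∈ m, g p.2 (g p.1 x) = x} = ⋂ p ∈ {p | p ∈ m}, {x : X | g p.2 (g p.1 x) = x} := by
      ext q; simp
    show MeasurableSet {x | ∀ p ∈ m, g p.2 (g p.1 x) = x}
    rw [this]
    refine MeasurableSet.biInter (Set.to_countable _) fun p _ => ?_
    exact measurableSet_eq_fun ((hg.meas _).comp (hg.meas _)) measurable_id
  have hcol : ∀ m, ∃ c : X → ℕ, Measurable c ∧ ∀ x ∈ V m, ∀ y ∈ V m, x ≠ y →
      (∃ z, E x z ∧ (R m z x ∧ R m z y)) → c x ≠ c y := by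
    intro m
    refine hg.color (R := fun y x => ∃ z, E x z ∧ (R m z x ∧ R m z y)) ?_ ?_ (hV m) ?_
    · refine hg.exists (φ := fun q : X × X => q.2) measurable_snd
        (Q := fun q z => R m z q.2 ∧ R m z q.1) ?_
      refine MeasurableSet.inter ?_ ?_
      · exact (measurable_snd.prodMk (measurable_snd.comp measurable_fst)) (hR m)
      · exact (measurable_snd.prodMk (measurable_fst.comp measurable_fst)) (hR m)
    · rintro y x ⟨z, h1, h2, h3⟩
      exact hE.trans h1 (hE.symm (hRE m z y h3))
    · intro x hx
      refine ((hRf m x).biUnion fun z _ => (m.map fun p => g p.2 z).toFinset.finite_toSet).subset ?_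
      rintro y ⟨hy, z, -, h2, p, hp, rfl⟩
      refine mem_biUnion h2 ?_
      simp only [List.coe_toFinset, List.mem_map, mem_ofPred_eq]
      exact ⟨p, hp, hy.1 p hp⟩
  choose c hcm hc using hcol
  obtain ⟨τ, hτ⟩ := exists_surjective_nat (List (ℕ × ℕ) × ℕ)
  obtain ⟨C, F, h1, h2, h3, h4, h5, h6, h7, h8⟩ := hg.greedy hE
    (A := fun n => V (τ n).1 ∩ c (τ n).1 ⁻¹' {(τ n).2}) (S := fun n => R (τ n).1)
    (fun n => (hV _).inter (hcm _ (measurableSet_singleton _))) (fun n => hR _) (fun n => hRE _)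
    (fun n => hRf _) (by
      rintro n x ⟨hx, hcx⟩ y ⟨hy, hcy⟩ z hzx hzy
      by_contra hne
      exact hc _ x hx y hy hne ⟨z, hRE _ z x hzx, hzx, hzy⟩
        ((mem_singleton_iff.1 hcx).trans (mem_singleton_iff.1 hcy).symm))
  refine ⟨C, F, h1, h2, h3, h4, h5, ?_, h7, ?_⟩
  · intro x hx
    obtain ⟨n, r, hr, hrx, heq⟩ := h6 x hx
    exact ⟨r, hrx, heq ▸ hr.1.2⟩
  · intro x S hS hxS hSE hdisj hgood
    have hij : ∀ y, ∃ p : ℕ × ℕ, y ∈ S → g p.1 x = y ∧ g p.2 y = x := by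
      intro y
      by_cases hy : y ∈ S
      · obtain ⟨i, hi⟩ := (hg.iff x y).1 (hSE y hy)
        obtain ⟨j, hj⟩ := (hg.iff y x).1 (hE.symm (hSE y hy))
        exact ⟨(i, j), fun _ => ⟨hi, hj⟩⟩
      · exact ⟨(0,0), fun h => absurd h hy⟩
    choose pr hpr using hij
    let m : List (ℕ × ℕ) := hS.toFinset.toList.map pr
    have hmem : ∀ p, p ∈ m ↔ ∃ y ∈ S, pr y = p := by
      intro p; simp [m]
    have hSm : {y | R m y x} = S := by
      ext y
      constructor
      · rintro ⟨p, hp, rfl⟩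
        obtain ⟨y, hy, rfl⟩ := (hmem p).1 hp
        rw [(hpr y hy).1]; exact hy
      · intro hy
        exact ⟨pr y, (hmem _).2 ⟨y, hy, rfl⟩, (hpr y hy).1⟩
    have hxV : x ∈ V m := by
      refine ⟨?_, by rw [hSm]; exact hgood⟩
      intro p hp
      obtain ⟨y, hy, rfl⟩ := (hmem p).1 hp
      rw [(hpr y hy).1, (hpr y hy).2]
    obtain ⟨n, hn⟩ := hτ (m, c m x)
    obtain ⟨z, hz, hzC⟩ := h8 n x (by rw [hn]; exact ⟨hxV, rfl⟩) (by
      rw [hn]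
      have : x ∈ {y | R m y x} := hSm ▸ hxS
      exact ⟨x, this⟩)
    rw [hn] at hz
    have : z ∈ S := hSm ▸ hz
    exact Set.disjoint_left.1 hdisj this hzC

theorem IsCocycle.self {X : Type*} [MeasurableSpace X] {E : X → X → Prop} {ρ : X → X → ℝ}
    (hρ : IsCocycle E ρ) (hE : Equivalence E) (x : X) : ρ x x = 1 := by
  have h := hρ.2.2 (hE.refl x) (hE.refl x)
  have hp := hρ.2.1 (hE.refl x)
  have : ρ x x * (ρ x x - 1) = 0 := by linarith
  rcases mul_eq_zero.1 this with h | h <;> linarith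

theorem smooth_twist {X : Type*} [MeasurableSpace X] {E : X → X → Prop} {ρ : X → X → ℝ}
    {W : Set X} {c : X → ℕ} (hc : Measurable c) {q : X → ℝ} (hq : Measurable q)
    (hq0 : ∀ x ∈ W, 0 < q x) {U : Set ℝ} (hU : IsOpen U) (h1 : (1:ℝ) ∈ U)
    (h : ∀ x ∈ W, ∀ y ∈ W, x ≠ y → E x y → c x = c y → ρ x y * q x / q y ∉ U) :
    SmoothOn E ρ W := by
  have hO : IsOpen (Real.exp ⁻¹' U) := hU.preimage Real.continuous_exp
  obtain ⟨η, hη, hηU⟩ := Metric.isOpen_iff.1 hO 0 (by simpa using h1)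
  have hUU : ∀ t, 0 < t → |Real.log t| < η → t ∈ U := by
    intro t ht hl
    have : Real.log t ∈ Metric.ball (0:ℝ) η := by simpa using hl
    have := hηU this
    rwa [mem_preimage, Real.exp_log ht] at this
  let d : X → ℤ := fun x => ⌊Real.log (q x) / (η/2)⌋
  have hd : Measurable d := ((Real.measurable_log.comp hq).div_const _).floor
  refine ⟨Ioo (Real.exp (-(η/2))) (Real.exp (η/2)), isOpen_Ioo, ⟨?_, ?_⟩, ?_,
    fun x => Encodable.encode (c x, d x), ?_, ?_⟩
  · rw [Real.exp_lt_one_iff]; linarith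
  · rw [Real.one_lt_exp_iff]; linarith
  · intro t ht; exact (Real.exp_pos _).trans ht.1
  · exact (Measurable.of_discrete (f := (Encodable.encode : ℕ × ℤ → ℕ))).comp (hc.prodMk hd)
  · intro x y hx hy hne hxy hρ hcc
    have := Encodable.encode_injective hcc
    obtain ⟨hc', hd'⟩ := Prod.mk.inj this
    refine h x hx y hy hne hxy hc' ?_
    have hpos : 0 < ρ x y := (Real.exp_pos _).trans hρ.1
    have hqx := hq0 x hx
    have hqy := hq0 y hy
    refine hUU _ (by positivity) ?_
    rw [Real.log_div (by positivity) (by positivity), Real.log_mul (by positivity) (by positivity)]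
    have e1 : -(η/2) < Real.log (ρ x y) := (Real.lt_log_iff_exp_lt hpos).2 hρ.1
    have e2 : Real.log (ρ x y) < η/2 := (Real.log_lt_iff_lt_exp hpos).2 hρ.2
    have e3 := Int.abs_sub_lt_one_of_floor_eq_floor hd'
    rw [← sub_div, abs_div, abs_of_pos (by linarith : 0 < η/2), div_lt_one (by linarith), abs_lt] at e3
    rw [abs_lt]
    constructor <;> linarith

theorem SmoothOn.mono {X : Type*} [MeasurableSpace X] {E : X → X → Prop} {ρ : X → X → ℝ}
    {W W' : Set X} (h : SmoothOn E ρ W) (hW : W' ⊆ W) : SmoothOn E ρ W' := by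
  obtain ⟨U, h1, h2, h3, c, h4, h5⟩ := h
  exact ⟨U, h1, h2, h3, c, h4, fun x y hx hy => h5 (hW hx) (hW hy)⟩

theorem SmoothOn.union {X : Type*} [MeasurableSpace X] {E : X → X → Prop} {ρ : X → X → ℝ}
    {W W' : Set X} (hW : MeasurableSet W) (h : SmoothOn E ρ W) (h' : SmoothOn E ρ W') :
    SmoothOn E ρ (W ∪ W') := by
  classical
  obtain ⟨U, h1, h2, h3, c, h4, h5⟩ := h
  obtain ⟨U', h1', h2', h3', c', h4', h5'⟩ := h'
  refine ⟨U ∩ U', h1.inter h1', ⟨h2, h2'⟩, inter_subset_left.trans h3,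
    fun x => if x ∈ W then 2 * c x else 2 * c' x + 1,
    Measurable.ite hW (h4.const_mul 2) ((h4'.const_mul 2).add_const 1), ?_⟩
  intro x y hx hy hne hE hρ
  have a := @h5 x y
  have b := @h5' x y
  by_cases hxW : x ∈ W <;> by_cases hyW : y ∈ W
  · have := a hxW hyW hne hE hρ.1
    simp only [if_pos hxW, if_pos hyW]; omega
  · simp only [if_pos hxW, if_neg hyW]; omega
  · simp only [if_neg hxW, if_pos hyW]; omega
  · have := b (hx.resolve_left hxW) (hy.resolve_left hyW) hne hE hρ.2
    simp only [if_neg hxW, if_neg hyW]; omega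

theorem SmoothOn.sat {X : Type*} [MeasurableSpace X] [StandardBorelSpace X]
    {E : X → X → Prop} (hE : Equivalence E) {g : ℕ → X → X} (hg : Gens E g) {ρ : X → X → ℝ}
    (hρ : IsCocycle E ρ) {A : Set X} (hA : MeasurableSet A) (h : SmoothOn E ρ A) :
    SmoothOn E ρ {x | ∃ y, E x y ∧ y ∈ A} := by
  classical
  set W := {x | ∃ y, E x y ∧ y ∈ A} with hWdef
  have hW : MeasurableSet W := hg.exists (φ := fun x => x) measurable_id (Q := fun _ y => y ∈ A)
    (measurable_snd hA)
  obtain ⟨U, hU, h1, hU0, c, hc, hcU⟩ := h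
  let P : ℕ → X → Prop := fun n x => x ∉ W ∨ (g n.unpair.1 x ∈ A ∧ g n.unpair.2 (g n.unpair.1 x) = x)
  have hP : ∀ n, MeasurableSet {x | P n x} := by
    intro n
    refine hW.compl.union (MeasurableSet.inter ?_ ?_)
    · exact hg.meas _ hA
    · exact measurableSet_eq_fun ((hg.meas _).comp (hg.meas _)) measurable_id
  have hex : ∀ x, ∃ n, P n x := by
    intro x
    by_cases hx : x ∈ W
    · obtain ⟨y, hxy, hy⟩ := hx
      obtain ⟨i, rfl⟩ := (hg.iff _ _).1 hxy
      obtain ⟨j, hj⟩ := (hg.iff _ _).1 (hE.symm hxy)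
      refine ⟨Nat.pair i j, Or.inr ?_⟩
      simp only [Nat.unpair_pair]
      exact ⟨hy, hj⟩
    · exact ⟨0, Or.inl hx⟩
  let N : X → ℕ := fun x => Nat.find (hex x)
  have hN : Measurable N := measurable_find hex hP
  have hNW : ∀ x ∈ W, g (N x).unpair.1 x ∈ A ∧ g (N x).unpair.2 (g (N x).unpair.1 x) = x :=
    fun x hx => (Nat.find_spec (hex x)).resolve_left (fun h => h hx)
  let φ : X → X := fun x => g (N x).unpair.1 x
  have hφ : Measurable φ := by
    have : Measurable (fun p : X × ℕ => g p.2.unpair.1 p.1) :=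
      measurable_from_prod_countable_left fun n => hg.meas n.unpair.1
    exact this.comp (measurable_id.prodMk hN)
  have hφE : ∀ x, E x (φ x) := fun x => (hg.iff _ _).2 ⟨_, rfl⟩
  refine smooth_twist (c := fun x => Nat.pair (N x) (c (φ x))) (q := fun x => ρ (φ x) x) ?_ ?_ ?_ hU h1 ?_
  · exact (Measurable.of_discrete (f := fun p : ℕ × ℕ => Nat.pair p.1 p.2)).comp
      (hN.prodMk (hc.comp hφ))
  · exact hρ.1.comp (hφ.prodMk measurable_id)
  · intro x _
    exact hρ.2.1 (hE.symm (hφE x))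
  · intro x hx y hy hne hxy hcc hmem
    obtain ⟨hNN, hcφ⟩ := Nat.pair_eq_pair.1 hcc
    have e : ρ x y * ρ (φ x) x / ρ (φ y) y = ρ (φ x) (φ y) := by
      have hp := hρ.2.1 (hE.symm (hφE y))
      rw [div_eq_iff hp.ne']
      have a1 := hρ.2.2 (hE.symm (hφE x)) hxy
      have a2 := hρ.2.2 (hE.trans (hE.symm (hφE x)) (hE.trans hxy (hφE y))) (hE.symm (hφE y))
      rw [← a2, a1, mul_comm]
    rw [e] at hmem
    refine hcU (hNW x hx).1 (hNW y hy).1 ?_ (hE.trans (hE.symm (hφE x)) (hE.trans hxy (hφE y))) hmem hcφ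
    intro heq
    apply hne
    rw [← (hNW x hx).2, ← (hNW y hy).2]
    change g (N x).unpair.1 x = g (N y).unpair.1 y at heq
    rw [heq, hNN]

theorem rSize_eq {X : Type*} {ρ : X → X → ℝ} (s : Finset X) (z : X) :
    rSize ρ (s : Set X) z = ∑ y ∈ s, ρ y z := by
  unfold rSize
  exact Finset.tsum_subtype' s (fun y => ρ y z)

theorem avgOn_eq {X : Type*} {ρ : X → X → ℝ} {f : X → ℝ} (s : Finset X) (z : X) :
    avgOn ρ f (s : Set X) univ z = (∑ y ∈ s, f y * ρ y z) / ∑ y ∈ s, ρ y z := by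
  unfold avgOn
  rw [rSize_eq, inter_univ]
  congr 1
  exact Finset.tsum_subtype' s (fun y => f y * ρ y z)

theorem avgOn_base {X : Type*} [MeasurableSpace X] {E : X → X → Prop} {ρ : X → X → ℝ}
    (hρ : IsCocycle E ρ) {f : X → ℝ} {S : Set X} {x y : X} (hS : ∀ z ∈ S, E z x) (hxy : E x y) :
    avgOn ρ f S univ y = avgOn ρ f S univ x := by
  unfold avgOn rSize
  have hp := hρ.2.1 hxy
  have e1 : ∑' z : S, ρ z y = (∑' z : S, ρ z x) * ρ x y := by
    rw [← tsum_mul_right]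
    exact tsum_congr fun z => hρ.2.2 (hS z z.2) hxy
  have e2 : ∑' z : ↥(S ∩ univ), f z * ρ z y = (∑' z : ↥(S ∩ univ), f z * ρ z x) * ρ x y := by
    rw [← tsum_mul_right]
    exact tsum_congr fun z => by rw [hρ.2.2 (hS z z.2.1) hxy, mul_assoc]
  rw [e1, e2, mul_div_mul_right _ _ hp.ne']

theorem Gens.real_tsum {X : Type*} [MeasurableSpace X] [StandardBorelSpace X]
    {E : X → X → Prop} (hE : Equivalence E) {g : ℕ → X → X} (hg : Gens E g) {ρ : X → X → ℝ}
    (hρ : IsCocycle E ρ) {f : X → ℝ} (hf : Measurable f) (hf0 : ∀ x, 0 ≤ f x)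
    {R : X → X → Prop} (hR : MeasurableSet {q : X × X | R q.1 q.2}) (hRE : ∀ y x, R y x → E x y) :
    Measurable fun x => ∑' y : {y | R y x}, f y * ρ y x := by
  have h := hg.tsum hR hRE (h := fun y x => ENNReal.ofReal (f y * ρ y x))
    (((hf.comp measurable_fst).mul hρ.1).ennreal_ofReal)
  have := h.ennreal_toReal
  convert this using 2 with x
  rw [ENNReal.tsum_toReal_eq (fun _ => ENNReal.ofReal_ne_top)]
  refine tsum_congr fun y => ?_
  rw [ENNReal.toReal_ofReal]
  exact mul_nonneg (hf0 _) (hρ.2.1 (hE.symm (hRE _ _ y.2))).le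

theorem Gens.rSize {X : Type*} [MeasurableSpace X] [StandardBorelSpace X]
    {E : X → X → Prop} (hE : Equivalence E) {g : ℕ → X → X} (hg : Gens E g) {ρ : X → X → ℝ}
    (hρ : IsCocycle E ρ)
    {R : X → X → Prop} (hR : MeasurableSet {q : X × X | R q.1 q.2}) (hRE : ∀ y x, R y x → E x y) :
    Measurable fun x => rSize ρ {y | R y x} x := by
  have := hg.real_tsum hE hρ (f := fun _ => 1) measurable_const (fun _ => zero_le_one) hR hRE
  simpa [CocycleNadkarni.rSize] using this

theorem Gens.avgOn {X : Type*} [MeasurableSpace X] [StandardBorelSpace X]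
    {E : X → X → Prop} (hE : Equivalence E) {g : ℕ → X → X} (hg : Gens E g) {ρ : X → X → ℝ}
    (hρ : IsCocycle E ρ) {f : X → ℝ} (hf : Measurable f) (hf0 : ∀ x, 0 ≤ f x)
    {R : X → X → Prop} (hR : MeasurableSet {q : X × X | R q.1 q.2}) (hRE : ∀ y x, R y x → E x y) :
    Measurable fun x => avgOn ρ f {y | R y x} univ x := by
  have e : (fun x => CocycleNadkarni.avgOn ρ f {y | R y x} univ x)
      = fun x => (∑' y : {y | R y x}, f y * ρ y x) / CocycleNadkarni.rSize ρ {y | R y x} x := by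
    funext x
    unfold CocycleNadkarni.avgOn
    rw [inter_univ]
  rw [e]
  exact (hg.real_tsum hE hρ hf hf0 hR hRE).div (hg.rSize hE hρ hR hRE)

theorem combine_aux {X : Type*} {L H : Set X} {w h : X → ℝ} {s V : ℝ} (hs : 0 < s) (hV : 0 < V)
    (hL : L.Infinite) (hH : H.Infinite)
    (hLw : ∀ x ∈ L, 1 / 2 ≤ w x) (hLh : ∀ x ∈ L, h x < s / 3)
    (hHw : ∀ x ∈ H, V / 4 ≤ w x) (hHw' : ∀ x ∈ H, w x ≤ V)
    (hHh : ∀ x ∈ H, 2 * s / 3 < h x) (hHs : ∀ x ∈ H, h x ≤ s) :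
    ∃ S : Finset X, (S : Set X) ⊆ L ∪ H ∧ S.Nonempty ∧
      s / 3 * ∑ x ∈ S, w x ≤ ∑ x ∈ S, h x * w x ∧
      ∑ x ∈ S, h x * w x ≤ 2 * s / 3 * ∑ x ∈ S, w x := by
  classical
  obtain ⟨N, hN⟩ := exists_nat_gt (2 * V)
  obtain ⟨A, hAL, hAN⟩ := hL.exists_subset_card_eq N
  have hAL' : ∀ x ∈ A, x ∈ L := fun x hx => hAL hx
  have hN0 : 0 < N := by
    have : (0:ℝ) < N := by linarith
    exact_mod_cast this
  have hAne : A.Nonempty := by rw [← Finset.card_pos]; omega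
  have hAw : V ≤ ∑ x ∈ A, w x := by
    have : ∑ x ∈ A, (1 / 2 : ℝ) ≤ ∑ x ∈ A, w x := Finset.sum_le_sum fun x hx => hLw x (hAL' x hx)
    rw [Finset.sum_const, hAN, nsmul_eq_mul] at this
    linarith
  let e := hH.natEmbedding
  have he : ∀ n, (e n : X) ∈ H := fun n => (e n).2
  let em : ℕ ↪ X := e.trans (Function.Embedding.subtype _)
  let S : ℕ → Finset X := fun n => A ∪ (Finset.range n).map em
  have hem : ∀ n, em n ∈ H := he
  have hdisj : ∀ n, em n ∉ A := fun n hn => by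
    have := hLh _ (hAL' _ hn)
    have := hHh _ (hem n)
    linarith
  have hS0 : S 0 = A := by simp [S]
  have hSn : ∀ n, em n ∉ S n := by
    intro n hn
    rcases Finset.mem_union.1 hn with hn | hn
    · exact hdisj n hn
    · simp at hn
  have hSs : ∀ n, S (n+1) = insert (em n) (S n) := by
    intro n
    simp only [S, Finset.range_add_one, Finset.map_insert, Finset.union_insert]
  have hsum : ∀ (k : X → ℝ) n, ∑ x ∈ S (n+1), k x = k (em n) + ∑ x ∈ S n, k x := by
    intro k n
    rw [hSs, Finset.sum_insert (hSn n)]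
  let Φ : ℕ → ℝ := fun n => ∑ x ∈ S n, (h x - s / 3) * w x
  have hgrow : ∀ n, Φ 0 + n * (s / 3 * (V / 4)) ≤ Φ n := by
    intro n
    induction n with
    | zero => simp
    | succ n ih =>
      have e1 : Φ (n+1) = (h (em n) - s/3) * w (em n) + Φ n := hsum _ n
      have h1 := hHh _ (hem n)
      have h2 := hHw _ (hem n)
      have : s / 3 * (V / 4) ≤ (h (em n) - s/3) * w (em n) :=
        mul_le_mul (by linarith) h2 (by linarith) (by linarith)
      push_cast
      linarith
  have hex : ∃ n, 0 ≤ Φ n := by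
    have hp : 0 < s / 3 * (V / 4) := by positivity
    obtain ⟨n, hn⟩ := exists_nat_gt (-Φ 0 / (s / 3 * (V / 4)))
    rw [div_lt_iff₀ hp] at hn
    exact ⟨n, by linarith [hgrow n]⟩
  have hΦ0 : Φ 0 < 0 := by
    have : Φ 0 = ∑ x ∈ A, (h x - s / 3) * w x := by simp only [Φ, hS0]
    rw [this]
    refine Finset.sum_neg (fun x hx => ?_) hAne
    exact mul_neg_of_neg_of_pos (by linarith [hLh _ (hAL' x hx)]) (by linarith [hLw _ (hAL' x hx)])
  have hsplit : ∀ (c : ℝ) (T : Finset X), ∑ x ∈ T, (h x - c) * w x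
      = ∑ x ∈ T, h x * w x - c * ∑ x ∈ T, w x := by
    intro c T
    rw [Finset.mul_sum, ← Finset.sum_sub_distrib]
    exact Finset.sum_congr rfl fun x _ => by ring
  have hm := Nat.find_spec hex
  obtain ⟨n, hn⟩ : ∃ n, Nat.find hex = n + 1 := by
    refine Nat.exists_eq_succ_of_ne_zero fun h0 => ?_
    rw [h0] at hm; linarith
  have hn' : Φ n < 0 := by
    have := Nat.find_min hex (m := n) (by omega)
    linarith
  rw [hn] at hm
  have hwA : ∀ n, V ≤ ∑ x ∈ S n, w x := by
    intro n
    induction n with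
    | zero => rw [hS0]; exact hAw
    | succ n ih => rw [hsum]; linarith [hHw _ (hem n)]
  refine ⟨S (n+1), ?_, ?_, ?_, ?_⟩
  · intro x hx
    rcases Finset.mem_union.1 (Finset.mem_coe.1 hx) with hx | hx
    · exact Or.inl (hAL' x hx)
    · obtain ⟨i, _, rfl⟩ := Finset.mem_map.1 hx
      exact Or.inr (hem i)
  · exact hAne.mono Finset.subset_union_left
  · have := hsplit (s/3) (S (n+1))
    change Φ (n+1) = _ at this
    linarith
  · have h1 := hsplit (s/3) (S n)
    change Φ n = _ at h1
    rw [hsum, hsum]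
    have h2 := hwA n
    have h3 := hHw' _ (hem n)
    have h4 := hHs _ (hem n)
    have h5 := hHw _ (hem n)
    have h6 : (h (em n) - 2 * s / 3) * w (em n) ≤ s / 3 * ∑ x ∈ S n, w x :=
      mul_le_mul (by linarith) (by linarith) (by linarith) (by linarith)
    linarith

theorem Gens.smooth_fin {X : Type*} [MeasurableSpace X] [StandardBorelSpace X]
    {E : X → X → Prop} (hE : IsCBER E) {g : ℕ → X → X} (hg : Gens E g) {ρ : X → X → ℝ}
    (hρ : IsCocycle E ρ) {A : Set X} (hA : MeasurableSet A) :
    MeasurableSet {x | x ∈ A ∧ {y | y ∈ A ∧ E x y ∧ ρ y x ∈ Ioo (1/2) 2}.Finite} ∧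
    SmoothOn E ρ {x | ∃ y, E x y ∧ y ∈ {x | x ∈ A ∧ {y | y ∈ A ∧ E x y ∧ ρ y x ∈ Ioo (1/2) 2}.Finite}} := by
  have hRm : MeasurableSet {q : X × X | q.1 ∈ A ∧ E q.2 q.1 ∧ ρ q.1 q.2 ∈ Ioo (1/2 : ℝ) 2} := by
    refine (measurable_fst hA).inter (MeasurableSet.inter ?_ (hρ.1 measurableSet_Ioo))
    exact (measurable_swap hE.2.1)
  have hfin := hg.finite (R := fun y x => y ∈ A ∧ E x y ∧ ρ y x ∈ Ioo (1/2 : ℝ) 2) hRm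
    (fun y x h => h.2.1)
  have hm : MeasurableSet {x | x ∈ A ∧ {y | y ∈ A ∧ E x y ∧ ρ y x ∈ Ioo (1/2 : ℝ) 2}.Finite} :=
    hA.inter hfin
  refine ⟨hm, SmoothOn.sat hE.1 hg hρ hm ?_⟩
  obtain ⟨c, hc, hcc⟩ := hg.color (R := fun y x => y ∈ A ∧ E x y ∧ ρ y x ∈ Ioo (1/2 : ℝ) 2) hRm
    (fun y x h => h.2.1) hm (fun x hx => hx.2.subset fun y hy => hy.2)
  refine ⟨Ioo (1/2) 2, isOpen_Ioo, by norm_num, fun t ht => by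
    have := ht.1; simp only [mem_Ioi]; linarith, c, hc, ?_⟩
  intro x y hx hy hne hxy hr
  exact (hcc y hy x hx hne.symm ⟨hx.1, hE.1.symm hxy, hr⟩).symm

theorem one_step {X : Type*} [MeasurableSpace X] [StandardBorelSpace X]
    {E : X → X → Prop} (hE : IsCBER E) {ρ : X → X → ℝ} (hρ : IsCocycle E ρ)
    {f : X → ℝ} (hf : Measurable f) (hf0 : ∀ x, 0 ≤ f x) {s : ℝ}
    (hs : ∀ x y, E x y → f x - f y ≤ s) :
    ∃ B : Set X, MeasurableSet B ∧ EInvariant E B ∧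
      ∃ F : X → X → Prop, IsFinSubequivOn E B F ∧ SmoothOn E ρ Bᶜ ∧
        ∀ x ∈ B, ∀ y ∈ B, E x y →
          avgOn ρ f {z | F z x} univ x - avgOn ρ f {z | F z y} univ y ≤ 2 / 3 * s := by
  classical
  obtain ⟨g, hgm, hgi⟩ := exists_gens hE
  have hg : Gens E g := ⟨hgm, hgi⟩
  have hE1 := hE.1
  let a : X → ℝ := fun x => ⨅ n, f (g n x)
  have ha : Measurable a := Measurable.iInf fun n => hf.comp (hgm n)
  have hbdd : ∀ x, BddBelow (range fun n => f (g n x)) := fun x => ⟨0, by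
    rintro _ ⟨n, rfl⟩; exact hf0 _⟩
  have haf : ∀ x y, E x y → a x ≤ f y := by
    intro x y hxy
    obtain ⟨n, rfl⟩ := (hgi x y).1 hxy
    exact ciInf_le (hbdd x) n
  have hfa : ∀ x y, E x y → f y ≤ a x + s := by
    intro x y hxy
    have : f y - s ≤ a x := le_ciInf fun n => by
      have h1 : E x (g n x) := (hgi _ _).2 ⟨n, rfl⟩
      have := hs y (g n x) (hE1.trans (hE1.symm hxy) h1)
      linarith
    linarith
  have hainv : ∀ x y, E x y → a x = a y := by
    have : ∀ x y, E x y → a x ≤ a y := fun x y hxy => le_ciInf fun n =>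
      haf x _ (hE1.trans hxy ((hgi _ _).2 ⟨n, rfl⟩))
    intro x y hxy
    exact le_antisymm (this x y hxy) (this y x (hE1.symm hxy))
  have hs0 : ∀ x : X, 0 ≤ s := fun x => by simpa using hs x x (hE1.refl x)
  obtain ⟨C, F, hC, hF, hFm, hFE, hFfin, hCgood, hCout, hmax⟩ := Gens.maximal (E := E) hE1 hg
    (Good := fun x S => a x + s/3 ≤ avgOn ρ f S univ x ∧ avgOn ρ f S univ x ≤ a x + 2*s/3) (by
      intro R hR hRE
      have := hg.avgOn hE1 hρ hf hf0 hR hRE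
      exact (measurableSet_le (ha.add_const _) this).inter (measurableSet_le this (ha.add_const _)))
  have hsing : ∀ x, avgOn ρ f {x} univ x = f x := by
    intro x
    have := avgOn_eq (ρ := ρ) (f := f) {x} x
    rw [Finset.coe_singleton] at this
    rw [this]
    simp [hρ.self hE1]
  let YL : Set X := {x | x ∉ C ∧ f x < a x + s/3}
  let YH : Set X := {x | x ∉ C ∧ a x + 2*s/3 < f x}
  have hYL : MeasurableSet YL := hC.compl.inter (measurableSet_lt hf (ha.add_const _))
  have hYH : MeasurableSet YH := hC.compl.inter (measurableSet_lt (ha.add_const _) hf)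
  obtain ⟨mL, sL⟩ := hg.smooth_fin hE hρ hYL
  obtain ⟨mH, sH⟩ := hg.smooth_fin hE hρ hYH
  set AL := {x | x ∈ YL ∧ {y | y ∈ YL ∧ E x y ∧ ρ y x ∈ Ioo (1/2) 2}.Finite} with hAL
  set AH := {x | x ∈ YH ∧ {y | y ∈ YH ∧ E x y ∧ ρ y x ∈ Ioo (1/2) 2}.Finite} with hAH
  have mWL : MeasurableSet {x | ∃ y, E x y ∧ y ∈ AL} :=
    hg.exists (φ := fun x => x) measurable_id (Q := fun _ y => y ∈ AL) (measurable_snd mL)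
  have mWH : MeasurableSet {x | ∃ y, E x y ∧ y ∈ AH} :=
    hg.exists (φ := fun x => x) measurable_id (Q := fun _ y => y ∈ AH) (measurable_snd mH)
  let B : Set X := ({x | ∃ y, E x y ∧ y ∈ AL} ∪ {x | ∃ y, E x y ∧ y ∈ AH})ᶜ
  have hB : MeasurableSet B := (mWL.union mWH).compl
  have hBinv : EInvariant E B := by
    intro x y hxy hx hy
    apply hx
    rcases hy with ⟨z, hz, hzA⟩ | ⟨z, hz, hzA⟩
    · exact Or.inl ⟨z, hE1.trans hxy hz, hzA⟩
    · exact Or.inr ⟨z, hE1.trans hxy hz, hzA⟩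
  have hBB : ∀ x y, E x y → (x ∈ B ↔ y ∈ B) := fun x y h => ⟨hBinv h, hBinv (hE1.symm h)⟩
  let F' : X → X → Prop := fun x y => x = y ∨ (F x y ∧ x ∈ B ∧ y ∈ B)
  have hF'cls : ∀ x ∈ B, {z | F' z x} = {z | F z x} := by
    intro x hx
    ext z
    constructor
    · rintro (rfl | h)
      · exact hF.refl _
      · exact h.1
    · intro h
      exact Or.inr ⟨h, (hBB _ _ (hFE _ _ h)).2 hx, hx⟩
  -- the combination contradiction
  have hcomb : ∀ y0 ∈ B, ∀ z0 ∈ B, E y0 z0 → y0 ∈ YL → z0 ∈ YH → False := by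
    intro y0 hy0 z0 hz0 hyz hyL hzH
    have hLinf : {y | y ∈ YL ∧ E y0 y ∧ ρ y y0 ∈ Ioo (1/2 : ℝ) 2}.Infinite := fun hfin =>
      hy0 (Or.inl ⟨y0, hE1.refl _, hyL, hfin⟩)
    have hHinf : {y | y ∈ YH ∧ E z0 y ∧ ρ y z0 ∈ Ioo (1/2 : ℝ) 2}.Infinite := fun hfin =>
      hz0 (Or.inr ⟨z0, hE1.refl _, hzH, hfin⟩)
    have hc := hρ.2.1 (hE1.symm hyz)
    have hspos : 0 < s := by
      have h1 := hyL.2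
      have h2 := haf y0 y0 (hE1.refl _)
      linarith
    obtain ⟨S, hSs, ⟨x, hxS⟩, hS1, hS2⟩ := combine_aux (w := fun y => ρ y y0) (h := fun y => f y - a y0)
      (V := 2 * ρ z0 y0) hspos (by linarith) hLinf hHinf
      (fun y hy => hy.2.2.1.le) (fun y hy => by
        have := hy.1.2; rw [← hainv _ _ hy.2.1] at this; linarith)
      (fun y hy => by
        rw [hρ.2.2 (hE1.symm hy.2.1) (hE1.symm hyz)]
        nlinarith [hy.2.2.1])
      (fun y hy => by
        show ρ y y0 ≤ _
        rw [hρ.2.2 (hE1.symm hy.2.1) (hE1.symm hyz)]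
        nlinarith [hy.2.2.2])
      (fun y hy => by
        have := hy.1.2; rw [← hainv _ _ hy.2.1, ← hainv _ _ hyz] at this; linarith)
      (fun y hy => by
        have := hfa y0 y (hE1.trans hyz hy.2.1); linarith)
    have hSE : ∀ y ∈ S, E y0 y := by
      intro y hy
      rcases hSs (Finset.mem_coe.2 hy) with h | h
      · exact h.2.1
      · exact hE1.trans hyz h.2.1
    refine hmax x (S : Set X) S.finite_toSet hxS
      (fun y hy => hE1.trans (hE1.symm (hSE x hxS)) (hSE y hy)) ?_ ?_
    · rw [Set.disjoint_left]
      intro y hy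
      rcases hSs hy with h | h
      · exact h.1.1
      · exact h.1.1
    · have e := avgOn_base hρ (f := f) (S := (S : Set X)) (fun z hz => hE1.symm (hSE z hz)) (hSE x hxS)
      rw [← hainv _ _ (hSE x hxS), e, avgOn_eq]
      have hw : 0 < ∑ y ∈ S, ρ y y0 :=
        Finset.sum_pos (fun y hy => hρ.2.1 (hE1.symm (hSE y hy))) ⟨x, hxS⟩
      have hsp : ∑ y ∈ S, (f y - a y0) * ρ y y0 = ∑ y ∈ S, f y * ρ y y0 - a y0 * ∑ y ∈ S, ρ y y0 := by
        rw [Finset.mul_sum, ← Finset.sum_sub_distrib]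
        exact Finset.sum_congr rfl fun y _ => by ring
      rw [hsp] at hS1 hS2
      constructor
      · rw [le_div_iff₀ hw]; linarith
      · rw [div_le_iff₀ hw]; linarith
  -- averages
  have hcase : ∀ x ∈ B, (a x + s/3 ≤ avgOn ρ f {z | F' z x} univ x ∧
        avgOn ρ f {z | F' z x} univ x ≤ a x + 2*s/3) ∨
      (x ∈ YL ∧ avgOn ρ f {z | F' z x} univ x = f x) ∨
      (x ∈ YH ∧ avgOn ρ f {z | F' z x} univ x = f x) := by
    intro x hx
    rw [hF'cls x hx]
    by_cases hxC : x ∈ C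
    · left
      obtain ⟨r, hr, hgood⟩ := hCgood x hxC
      have e := avgOn_base hρ (f := f) (S := {z | F z x}) (fun z hz => hFE z x hz) (hE1.symm hr)
      rw [← e, ← hainv _ _ hr]
      exact hgood
    · right
      have hcls : {z | F z x} = {x} := by
        ext z
        exact ⟨fun h => hCout x hxC z h, fun h => by rw [mem_singleton_iff.1 h]; exact hF.refl x⟩
      rw [hcls, hsing]
      have hn := hmax x {x} (finite_singleton x) rfl (by rintro y rfl; exact hE1.refl _)
        (by simpa using hxC)
      rw [hsing] at hn
      by_cases h1 : f x < a x + s/3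
      · exact Or.inl ⟨⟨hxC, h1⟩, rfl⟩
      · refine Or.inr ⟨⟨hxC, ?_⟩, rfl⟩
        by_contra h2
        exact hn ⟨not_lt.1 h1, not_lt.1 h2⟩
  refine ⟨B, hB, hBinv, F', ⟨⟨fun x => Or.inl rfl, ?_, ?_⟩, ?_, ?_, ?_⟩, ?_, ?_⟩
  · rintro x y (rfl | ⟨h1, h2, h3⟩)
    · exact Or.inl rfl
    · exact Or.inr ⟨hF.symm h1, h3, h2⟩
  · rintro x y z (rfl | ⟨h1, h2, h3⟩) (rfl | ⟨h1', h2', h3'⟩)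
    · exact Or.inl rfl
    · exact Or.inr ⟨h1', h2', h3'⟩
    · exact Or.inr ⟨h1, h2, h3⟩
    · exact Or.inr ⟨hF.trans h1 h1', h2, h3'⟩
  · exact (measurableSet_eq_fun measurable_fst measurable_snd).union
      (hFm.inter ((measurable_fst hB).inter (measurable_snd hB)))
  · rintro x y (rfl | ⟨h1, h2, h3⟩)
    · exact Or.inl rfl
    · exact Or.inr ⟨hFE _ _ h1, h2, h3⟩
  · intro x
    refine (hFfin x).subset ?_
    rintro y (rfl | h)
    · exact hF.refl _
    · exact h.1
  · show SmoothOn E ρ (Bᶜ)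
    rw [compl_compl]
    exact SmoothOn.union mWL sL sH
  · intro x hx y hy hxy
    have hs0 := hs0 x
    have e := hainv x y hxy
    have hx1 := haf x x (hE1.refl _)
    have hx2 := hfa x x (hE1.refl _)
    have hy1 := haf y y (hE1.refl _)
    have hy2 := hfa y y (hE1.refl _)
    rcases hcase x hx with ⟨h1, h2⟩ | ⟨h1, h2⟩ | ⟨h1, h2⟩ <;>
      rcases hcase y hy with ⟨h3, h4⟩ | ⟨h3, h4⟩ | ⟨h3, h4⟩
    · linarith
    · linarith
    · linarith
    · have := h1.2; linarith
    · have := h1.2; linarith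
    · have := h1.2; linarith
    · linarith
    · exact (hcomb y hy x hx (hE1.symm hxy) h3 h1).elim
    · have := h3.2; linarith

theorem avg_double {X : Type*} [MeasurableSpace X] {E : X → X → Prop} (hE : Equivalence E)
    {ρ : X → X → ℝ} (hρ : IsCocycle E ρ) {f : X → ℝ} {F : X → X → Prop} (hF : Equivalence F)
    (hFE : ∀ x y, F x y → E x y) (hFfin : ∀ x, {z | F z x}.Finite) {U : Set X} (hU : U.Finite)
    {v : X} (hUv : ∀ u ∈ U, E u v) (hUT : ∀ u ∈ U, ∀ u' ∈ U, F u u' → u = u')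
    {S : Set X} (hS : ∀ z, z ∈ S ↔ ∃ u ∈ U, F z u) :
    avgOn ρ f S univ v = avgOn (fun x y => ρ x y * rSize ρ {z | F z x} x / rSize ρ {z | F z y} y)
      (fun x => avgOn ρ f {z | F z x} univ x) U univ v ∧ S.Finite := by
  classical
  let Fu : X → Finset X := fun u => (hFfin u).toFinset
  have hFu : ∀ u, {z | F z u} = (Fu u : Set X) := fun u => by simp [Fu]
  have hFu' : ∀ u z, z ∈ Fu u ↔ F z u := fun u z => by simp [Fu]
  let V : Finset X := hU.toFinset
  have hV : U = (V : Set X) := by simp [V]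
  have hV' : ∀ u, u ∈ V ↔ u ∈ U := fun u => by simp [V]
  have hS' : S = ((V.biUnion Fu : Finset X) : Set X) := by
    ext z
    rw [hS, Finset.mem_coe, Finset.mem_biUnion]
    simp only [hV', hFu']
  have hdis : (V : Set X).PairwiseDisjoint Fu := by
    intro u hu u' hu' hne
    rw [Function.onFun, Finset.disjoint_left]
    intro z hz hz'
    rw [hFu'] at hz hz'
    exact hne (hUT u ((hV' u).1 hu) u' ((hV' u').1 hu') (hF.trans (hF.symm hz) hz'))
  have hk : ∀ u, 0 < ∑ z ∈ Fu u, ρ z u := fun u =>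
    Finset.sum_pos (fun z hz => hρ.2.1 (hFE _ _ ((hFu' u z).1 hz))) ⟨u, (hFu' u u).2 (hF.refl u)⟩
  have key : ∀ h : X → ℝ, ∑ z ∈ V.biUnion Fu, h z * ρ z v
      = ∑ u ∈ V, (∑ z ∈ Fu u, h z * ρ z u) * ρ u v := by
    intro h
    rw [Finset.sum_biUnion hdis]
    refine Finset.sum_congr rfl fun u hu => ?_
    rw [Finset.sum_mul]
    refine Finset.sum_congr rfl fun z hz => ?_
    rw [hρ.2.2 (hFE _ _ ((hFu' u z).1 hz)) (hUv u ((hV' u).1 hu)), mul_assoc]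
  have key1 := key (fun _ => 1)
  simp only [one_mul] at key1
  refine ⟨?_, hS' ▸ Finset.finite_toSet _⟩
  rw [hS', hV, avgOn_eq, avgOn_eq, key f, key1]
  simp only [hFu, avgOn_eq, rSize_eq]
  have hv := hk v
  rw [← mul_div_mul_right _ _ (inv_ne_zero hv.ne'), Finset.sum_mul, Finset.sum_mul]
  congr 1
  · refine Finset.sum_congr rfl fun u _ => ?_
    have := (hk u).ne'
    field_simp
  · refine Finset.sum_congr rfl fun u _ => ?_
    rw [div_eq_mul_inv]; ring

theorem iterate_step {X : Type*} [MeasurableSpace X] [StandardBorelSpace X] (n : ℕ) :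
    ∀ (E : X → X → Prop) (ρ : X → X → ℝ) (f : X → ℝ) (s : ℝ), IsCBER E → IsCocycle E ρ →
      Measurable f → (∀ x, 0 ≤ f x) → (∀ x y, E x y → f x - f y ≤ s) →
    ∃ B : Set X, MeasurableSet B ∧ EInvariant E B ∧
      ∃ F : X → X → Prop, IsFinSubequivOn E B F ∧ SmoothOn E ρ Bᶜ ∧
        ∀ x ∈ B, ∀ y ∈ B, E x y →
          avgOn ρ f {z | F z x} univ x - avgOn ρ f {z | F z y} univ y ≤ (2 / 3) ^ n * s := by
  classical
  induction n with
  | zero =>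
    intro E ρ f s hE hρ hf hf0 hs
    refine ⟨univ, MeasurableSet.univ, fun _ _ _ _ => mem_univ _, Eq, ⟨⟨fun _ => rfl, Eq.symm, Eq.trans⟩,
      measurableSet_eq_fun measurable_fst measurable_snd, fun x y h => Or.inl h,
      fun x => (finite_singleton x).subset fun y hy => (Eq.symm hy)⟩, ?_, ?_⟩
    · exact ⟨Ioi 0, isOpen_Ioi, by norm_num, Subset.rfl, fun _ => 0, measurable_const,
        fun x y hx => absurd (mem_univ x) hx⟩
    · intro x _ y _ hxy
      have hsing : ∀ x, avgOn ρ f {z | z = x} univ x = f x := by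
        intro x
        have := avgOn_eq (ρ := ρ) (f := f) {x} x
        rw [Finset.coe_singleton] at this
        change avgOn ρ f {x} univ x = _
        rw [this]
        simp [hρ.self hE.1]
      rw [hsing, hsing]
      simpa using hs x y hxy
  | succ n ih =>
    intro E ρ f s hE hρ hf hf0 hs
    have hE1 := hE.1
    obtain ⟨B1, hB1, hB1inv, F1, ⟨hF1, hF1m, hF1E', hF1fin'⟩, hsm1, havg1⟩ :=
      one_step hE hρ hf hf0 hs
    have hF1E : ∀ x y, F1 x y → E x y := by
      intro x y h
      rcases hF1E' h with rfl | h
      · exact hE1.refl _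
      · exact h.1
    have hF1B : ∀ x y, F1 x y → x ∈ B1 → y ∈ B1 := fun x y h hx => hB1inv (hF1E _ _ h) hx
    have hF1fin : ∀ x, {z | F1 z x}.Finite := fun x =>
      (hF1fin' x).subset fun y hy => hF1.symm hy
    obtain ⟨g, hgm, hgi⟩ := exists_gens hE
    have hg : Gens E g := ⟨hgm, hgi⟩
    obtain ⟨e, he⟩ := exists_measurableEmbedding_real X
    let T : Set X := {x | x ∈ B1 ∧ ∀ y, E x y → (F1 y x → e x ≤ e y)}
    have hT : MeasurableSet T := by
      refine hB1.inter ?_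
      refine hg.forall (φ := fun x => x) measurable_id (Q := fun x y => F1 y x → e x ≤ e y) ?_
      have : {q : X × X | F1 q.2 q.1 → e q.1 ≤ e q.2} =
          {q : X × X | F1 q.2 q.1}ᶜ ∪ {q : X × X | e q.1 ≤ e q.2} := by
        ext q
        simp only [mem_ofPred_eq, mem_union, mem_compl_iff]
        tauto
      rw [this]
      exact (measurable_swap hF1m).compl.union (measurableSet_le (he.measurable.comp measurable_fst)
        (he.measurable.comp measurable_snd))
    have hTuniq : ∀ u ∈ T, ∀ u' ∈ T, F1 u u' → u = u' := by
      intro u hu u' hu' h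
      have h1 := hu.2 u' (hF1E _ _ h) (hF1.symm h)
      have h2 := hu'.2 u (hE1.symm (hF1E _ _ h)) h
      exact he.injective (le_antisymm h1 h2)
    let P : ℕ → X → Prop := fun m x => x ∉ B1 ∨ (g m x ∈ T ∧ F1 (g m x) x)
    have hP : ∀ m, MeasurableSet {x | P m x} := fun m =>
      hB1.compl.union (((hgm m) hT).inter (((hgm m).prodMk measurable_id) hF1m))
    have hex : ∀ x, ∃ m, P m x := by
      intro x
      by_cases hx : x ∈ B1
      · obtain ⟨u, hu, humin⟩ := Set.exists_min_image {z | F1 z x} e (hF1fin x) ⟨x, hF1.refl x⟩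
        obtain ⟨m, hm⟩ := (hgi x u).1 (hE1.symm (hF1E _ _ hu))
        refine ⟨m, Or.inr ?_⟩
        rw [hm]
        refine ⟨⟨hF1B _ _ (hF1.symm hu) hx, fun y _ hy => humin y (hF1.trans hy hu)⟩, hu⟩
      · exact ⟨0, Or.inl hx⟩
    let N : X → ℕ := fun x => Nat.find (hex x)
    have hN : Measurable N := measurable_find hex hP
    let t : X → X := fun x => g (N x) x
    have ht : Measurable t := by
      have : Measurable (fun p : X × ℕ => g p.2 p.1) :=
        measurable_from_prod_countable_left fun n => hgm n
      exact this.comp (measurable_id.prodMk hN)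
    have htT : ∀ x ∈ B1, t x ∈ T ∧ F1 (t x) x := fun x hx =>
      (Nat.find_spec (hex x)).resolve_left fun h => h hx
    have htE : ∀ x, E x (t x) := fun x => (hgi _ _).2 ⟨_, rfl⟩
    have htu : ∀ u ∈ T, ∀ z, F1 z u → t z = u := by
      intro u hu z hz
      have hzB : z ∈ B1 := hF1B _ _ (hF1.symm hz) hu.1
      exact hTuniq _ (htT z hzB).1 u hu (hF1.trans (htT z hzB).2 hz)
    let E' : X → X → Prop := fun x y => x = y ∨ (E x y ∧ x ∈ T ∧ y ∈ T)
    have hE'E : ∀ x y, E' x y → E x y := by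
      rintro x y (rfl | h)
      · exact hE1.refl _
      · exact h.1
    have hE' : IsCBER E' := by
      refine ⟨⟨fun x => Or.inl rfl, ?_, ?_⟩, ?_, ?_⟩
      · rintro x y (rfl | ⟨h1, h2, h3⟩)
        · exact Or.inl rfl
        · exact Or.inr ⟨hE1.symm h1, h3, h2⟩
      · rintro x y z (rfl | ⟨h1, h2, h3⟩) (rfl | ⟨h1', h2', h3'⟩)
        · exact Or.inl rfl
        · exact Or.inr ⟨h1', h2', h3'⟩
        · exact Or.inr ⟨h1, h2, h3⟩
        · exact Or.inr ⟨hE1.trans h1 h1', h2, h3'⟩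
      · exact (measurableSet_eq_fun measurable_fst measurable_snd).union
          (hE.2.1.inter ((measurable_fst hT).inter (measurable_snd hT)))
      · exact fun x => (hE.2.2 x).mono fun y hy => hE'E _ _ hy
    let k : X → ℝ := fun x => rSize ρ {z | F1 z x} x
    have hk : Measurable k := hg.rSize hE1 hρ hF1m fun y x h => hE1.symm (hF1E _ _ h)
    have hk0 : ∀ x, 0 < k x := by
      intro x
      have e1 : {z | F1 z x} = ((hF1fin x).toFinset : Set X) := by simp
      show 0 < rSize ρ {z | F1 z x} x
      rw [e1, rSize_eq]
      refine Finset.sum_pos (fun z hz => hρ.2.1 (hF1E _ _ (by simpa using hz)))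
        ⟨x, by simpa using hF1.refl x⟩
    let ρ' : X → X → ℝ := fun x y => ρ x y * k x / k y
    have hρ' : IsCocycle E' ρ' := by
      refine ⟨(hρ.1.mul (hk.comp measurable_fst)).div (hk.comp measurable_snd), ?_, ?_⟩
      · intro x y hxy
        exact div_pos (mul_pos (hρ.2.1 (hE'E _ _ hxy)) (hk0 x)) (hk0 y)
      · intro x y z hxy hyz
        show ρ x z * k x / k z = (ρ x y * k x / k y) * (ρ y z * k y / k z)
        rw [hρ.2.2 (hE'E _ _ hxy) (hE'E _ _ hyz)]
        have := (hk0 y).ne'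
        have := (hk0 z).ne'
        field_simp
    let f' : X → ℝ := fun x => avgOn ρ f {z | F1 z x} univ x
    have hf' : Measurable f' := hg.avgOn hE1 hρ hf hf0 hF1m fun y x h => hE1.symm (hF1E _ _ h)
    have hf'0 : ∀ x, 0 ≤ f' x := by
      intro x
      refine div_nonneg (tsum_nonneg fun z => mul_nonneg (hf0 _) ?_) (hk0 x).le
      exact (hρ.2.1 (hF1E _ _ z.2.1)).le
    have hosc : ∀ x y, E' x y → f' x - f' y ≤ 2 / 3 * s := by
      rintro x y (rfl | ⟨h1, h2, h3⟩)
      · have : 0 ≤ s := by simpa using hs x x (hE1.refl x)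
        rw [sub_self]; positivity
      · exact havg1 x h2.1 y h3.1 h1
    obtain ⟨B2, hB2, hB2inv, F2, ⟨hF2, hF2m, hF2E', hF2fin'⟩, hsm2, havg2⟩ :=
      ih E' ρ' f' (2 / 3 * s) hE' hρ' hf' hf'0 hosc
    let B : Set X := {x | x ∈ B1 ∧ t x ∈ B2}
    have hB : MeasurableSet B := hB1.inter (ht hB2)
    have hE't : ∀ x ∈ B1, ∀ y ∈ B1, E x y → E' (t x) (t y) := fun x hx y hy hxy =>
      Or.inr ⟨hE1.trans (hE1.symm (htE x)) (hE1.trans hxy (htE y)), (htT x hx).1, (htT y hy).1⟩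
    have hBinv : EInvariant E B := by
      intro x y hxy hx
      have hy : y ∈ B1 := hB1inv hxy hx.1
      exact ⟨hy, hB2inv (hE't x hx.1 y hy hxy) hx.2⟩
    let F : X → X → Prop := fun x y => x = y ∨ (x ∈ B ∧ y ∈ B ∧ F2 (t x) (t y))
    have hF : Equivalence F := by
      refine ⟨fun x => Or.inl rfl, ?_, ?_⟩
      · rintro x y (rfl | ⟨h1, h2, h3⟩)
        · exact Or.inl rfl
        · exact Or.inr ⟨h2, h1, hF2.symm h3⟩
      · rintro x y z (rfl | ⟨h1, h2, h3⟩) (rfl | ⟨h1', h2', h3'⟩)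
        · exact Or.inl rfl
        · exact Or.inr ⟨h1', h2', h3'⟩
        · exact Or.inr ⟨h1, h2, h3⟩
        · exact Or.inr ⟨h1, h2', hF2.trans h3 h3'⟩
    have hF2E : ∀ x y, F2 x y → E' x y := by
      intro x y h
      rcases hF2E' h with rfl | h
      · exact Or.inl rfl
      · exact h.1
    -- main computation
    have hmain : ∀ x ∈ B, avgOn ρ f {z | F z x} univ x = avgOn ρ' f' {u | F2 u (t x)} univ (t x) ∧
        {z | F z x}.Finite := by
      intro x hx
      have hUT : ∀ u, F2 u (t x) → u ∈ T ∧ u ∈ B2 := by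
        intro u hu
        rcases hF2E' hu with rfl | h
        · exact ⟨(htT x hx.1).1, hx.2⟩
        · refine ⟨?_, h.2.1⟩
          rcases h.1 with rfl | h'
          · exact (htT x hx.1).1
          · exact h'.2.1
      have hd := avg_double hE1 hρ (f := f) hF1 hF1E hF1fin (U := {u | F2 u (t x)})
        ((hF2fin' (t x)).subset fun u hu => hF2.symm hu) (v := t x)
        (fun u hu => hE'E _ _ (hF2E _ _ hu))
        (fun u hu u' hu' => hTuniq u (hUT u hu).1 u' (hUT u' hu').1) (S := {z | F z x}) (by
          intro z
          constructor
          · rintro (rfl | ⟨h1, h2, h3⟩)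
            · exact ⟨t z, hF2.refl _, hF1.symm (htT z hx.1).2⟩
            · exact ⟨t z, h3, hF1.symm (htT z h1.1).2⟩
          · rintro ⟨u, hu, hzu⟩
            have hu' := hUT u hu
            have htz := htu u hu'.1 z hzu
            refine Or.inr ⟨⟨hF1B _ _ (hF1.symm hzu) hu'.1.1, by rw [htz]; exact hu'.2⟩, hx, ?_⟩
            rw [htz]; exact hu)
      refine ⟨?_, hd.2⟩
      rw [← hd.1]
      symm
      apply avgOn_base hρ _ (htE x)
      rintro z (rfl | ⟨h1, h2, h3⟩)
      · exact hE1.refl _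
      · exact hE1.trans (htE z) (hE1.trans (hE'E _ _ (hF2E _ _ h3)) (hE1.symm (htE x)))
    refine ⟨B, hB, hBinv, F, ⟨hF, ?_, ?_, ?_⟩, ?_, ?_⟩
    · exact (measurableSet_eq_fun measurable_fst measurable_snd).union
        ((measurable_fst hB).inter ((measurable_snd hB).inter
          (((ht.comp measurable_fst).prodMk (ht.comp measurable_snd)) hF2m)))
    · rintro x y (rfl | ⟨h1, h2, h3⟩)
      · exact Or.inl rfl
      · exact Or.inr ⟨hE1.trans (htE x) (hE1.trans (hE'E _ _ (hF2E _ _ h3)) (hE1.symm (htE y))), h1, h2⟩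
    · intro x
      by_cases hx : x ∈ B
      · exact (hmain x hx).2.subset fun y hy => hF.symm hy
      · refine (finite_singleton x).subset ?_
        rintro y (rfl | h)
        · rfl
        · exact absurd h.1 hx
    · have hA : MeasurableSet (T ∩ B2ᶜ) := hT.inter hB2.compl
      have h1 : SmoothOn E ρ (T ∩ B2ᶜ) := by
        obtain ⟨U, hU, hU1, hU0, c, hc, hcc⟩ := hsm2
        refine smooth_twist hc hk (fun x _ => hk0 x) hU hU1 ?_
        intro x hx y hy hne hxy hcxy hmem
        exact hcc hx.2 hy.2 hne (Or.inr ⟨hxy, hx.1, hy.1⟩) hmem hcxy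
      refine SmoothOn.mono (SmoothOn.union hB1.compl hsm1 (SmoothOn.sat hE1 hg hρ hA h1)) ?_
      intro x hx
      by_cases hxB : x ∈ B1
      · exact Or.inr ⟨t x, htE x, (htT x hxB).1, fun h => hx ⟨hxB, h⟩⟩
      · exact Or.inl hxB
    · intro x hx y hy hxy
      rw [(hmain x hx).1, (hmain y hy).1]
      have := havg2 (t x) hx.2 (t y) hy.2 (hE't x hx.1 y hy.1 hxy)
      rw [pow_succ]
      linarith

theorem stmt18_core {X : Type*} [MeasurableSpace X] [StandardBorelSpace X]
    (E : X → X → Prop) (hE : IsCBER E)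
    (ρ : X → X → ℝ) (hρ : IsCocycle E ρ)
    (f : X → ℝ) (hf : Measurable f) (hf0 : ∀ x, 0 ≤ f x)
    (δ : ℝ) (hδ : 0 < δ) (ε : ℝ)
    (hε : ∃ s : ℝ, (∀ ⦃x y : X⦄, E x y → f x - f y ≤ s) ∧ s < ε) :
    ∃ B : Set X, MeasurableSet B ∧ EInvariant E B ∧
      ∃ F : X → X → Prop, IsFinSubequivOn E B F ∧
        SmoothOn E ρ Bᶜ ∧
        ∃ s : ℝ, (∀ ⦃x⦄, x ∈ B → ∀ ⦃y⦄, y ∈ B → E x y →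
            avgOn ρ f {z | F z x} Set.univ x - avgOn ρ f {z | F z y} Set.univ y ≤ s) ∧
          s < δ * ε := by
  obtain ⟨s, hs, hsε⟩ := hε
  rcases isEmpty_or_nonempty X with hX | ⟨⟨x0⟩⟩
  · obtain ⟨B, h1, h2, F, h3, h4, -⟩ := iterate_step 0 E ρ f s hE hρ hf hf0 hs
    exact ⟨B, h1, h2, F, h3, h4, δ * ε - 1, fun x => hX.elim x, by linarith⟩
  · have hs0 : 0 ≤ s := by simpa using hs (hE.1.refl x0)
    have hε0 : 0 < ε := lt_of_le_of_lt hs0 hsε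
    obtain ⟨n, hn⟩ := exists_pow_lt_of_lt_one hδ (by norm_num : (2/3 : ℝ) < 1)
    obtain ⟨B, h1, h2, F, h3, h4, h5⟩ := iterate_step n E ρ f s hE hρ hf hf0 hs
    refine ⟨B, h1, h2, F, h3, h4, (2/3)^n * s, fun x hx y hy hxy => h5 x hx y hy hxy, ?_⟩
    have : (2/3:ℝ)^n * s ≤ (2/3)^n * ε := mul_le_mul_of_nonneg_left hsε.le (by positivity)
    have : (2/3:ℝ)^n * ε < δ * ε := mul_lt_mul_of_pos_right hn hε0
    linarith

/-- First approximation lemma for cocycles: given Borel `f : X → [0,∞)`, `δ > 0`, and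
`ε > sup{f(x) − f(y) : (x,y) ∈ E}`, there are an `E`-invariant Borel set `B` and a finite
Borel subequivalence relation `F` of `E ↾ B` such that `ρ ↾ (E ↾ Bᶜ)` is smooth and
`δ·ε > sup{∫ f dμ^ρ_{[x]_F} − ∫ f dμ^ρ_{[y]_F} : (x,y) ∈ E ↾ B}`. -/
theorem stmt18 [MeasurableSpace X] [StandardBorelSpace X]
    (E : X → X → Prop) (hE : IsCBER E)
    (ρ : X → X → ℝ) (hρ : IsCocycle E ρ)
    (f : X → ℝ) (hf : Measurable f) (hf0 : ∀ x, 0 ≤ f x)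
    (δ : ℝ) (hδ : 0 < δ) (ε : ℝ)
    (hε : ∃ s : ℝ, (∀ ⦃x y : X⦄, E x y → f x - f y ≤ s) ∧ s < ε) :
    ∃ B : Set X, MeasurableSet B ∧ EInvariant E B ∧
      ∃ F : X → X → Prop, IsFinSubequivOn E B F ∧
        SmoothOn E ρ Bᶜ ∧
        ∃ s : ℝ, (∀ ⦃x⦄, x ∈ B → ∀ ⦃y⦄, y ∈ B → E x y →
            avgOn ρ f {z | F z x} Set.univ x - avgOn ρ f {z | F z y} Set.univ y ≤ s) ∧
          s < δ * ε := by
  exact stmt18_core E hE ρ hρ f hf hf0 δ hδ ε hε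

end CocycleNadkarni
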